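/- arXiv:1909.03870 — 2 statements merged into one kernel-verified Lean document; each statement's English description precedes it below -/
import Mathlib

section
/- Let μ̌ ∈ 𝒫(ℝ)^{dT} satisfy ℳ(μ̌) ≠ ∅, let μ̌ⁿ = (μ^n_{t,i}) satisfy r_n := 2 max_{1≤t≤T} Σ_{1≤i≤d} 𝒲₁(μ^n_{t,i}, μ_{t,i}) → 0, let c be Lipschitz, and let (ε_n)_{n≥1} converge to zero with ε_n ≥ r_n for all n. Then for each n ≥ 1 the problem P̄_{ε_n}(μ̌ⁿ) (respectively P̲_{ε_n}(μ̌ⁿ)) admits an optimizer π_n; the sequence (π_n)_{n≥1} is tight, and every weak limit point of (π_n)_{n≥1} is an optimizer for P̄(μ̌) (respectively P̲(μ̌)). In particular, (π_n)_{n≥1} converges weakly whenever P̄(μ̌) (respectively P̲(μ̌)) has a unique optimizer. -/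
open MeasureTheory Filter

namespace MMOT

/-- Path space `𝒳 = (ℝ^d)^T`. -/
abbrev Path (T d : ℕ) := Fin T → Fin d → ℝ

/-- σ-algebra generated by the coordinates `X_0, …, X_t` (0-indexed). -/
noncomputable def pastSigma (T d : ℕ) (t : ℕ) : MeasurableSpace (Path T d) :=
  ⨆ s : Fin T, ⨆ _ : (s : ℕ) ≤ t, MeasurableSpace.comap (fun x => x s) inferInstance

def HasMarginals {T d : ℕ} (π : Measure (Path T d)) (μ : Fin T → Fin d → Measure ℝ) : Prop :=
  ∀ t i, π.map (fun x => x t i) = μ t i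

/-- `E_π[X_{t+1,i} | X_0,…,X_t]`. -/
noncomputable def condNext {T d : ℕ} (π : Measure (Path T d)) (t : ℕ) (ht : t + 1 < T)
    (i : Fin d) : Path T d → ℝ :=
  π[fun x => x ⟨t + 1, ht⟩ i | pastSigma T d t]

def IsMartingaleMeasure {T d : ℕ} (π : Measure (Path T d)) : Prop :=
  ∀ (t : ℕ) (ht : t + 1 < T) (i : Fin d),
    condNext π t ht i =ᵐ[π] fun x => x ⟨t, Nat.lt_of_succ_lt ht⟩ i

/-- The set `ℳ(μ̌)` of calibrated martingale measures. -/
def MartSet {T d : ℕ} (μ : Fin T → Fin d → Measure ℝ) : Set (Measure (Path T d)) :=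
  {π | IsProbabilityMeasure π ∧ HasMarginals π μ ∧ IsMartingaleMeasure π}

/-- The relaxed set `ℳ_ε(μ̌)`: calibrated measures whose martingale defect is at most `ε`. -/
def MartSetEps {T d : ℕ} (μ : Fin T → Fin d → Measure ℝ) (ε : ℝ) :
    Set (Measure (Path T d)) :=
  {π | IsProbabilityMeasure π ∧ HasMarginals π μ ∧
    ∀ (t : ℕ) (ht : t + 1 < T),
      ∫ x, ∑ i, |condNext π t ht i x - x ⟨t, Nat.lt_of_succ_lt ht⟩ i| ∂π ≤ ε}

def primalVals {T d : ℕ} (c : Path T d → ℝ) (S : Set (Measure (Path T d))) : Set ℝ :=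
  {r | ∃ π ∈ S, Integrable c π ∧ r = ∫ x, c x ∂π}

noncomputable def PbarEps {T d : ℕ} (μ : Fin T → Fin d → Measure ℝ) (c : Path T d → ℝ)
    (ε : ℝ) : ℝ :=
  sSup (primalVals c (MartSetEps μ ε))

noncomputable def PlowEps {T d : ℕ} (μ : Fin T → Fin d → Measure ℝ) (c : Path T d → ℝ)
    (ε : ℝ) : ℝ :=
  sInf (primalVals c (MartSetEps μ ε))

noncomputable def Pbar {T d : ℕ} (μ : Fin T → Fin d → Measure ℝ) (c : Path T d → ℝ) : ℝ :=
  sSup (primalVals c (MartSet μ))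

noncomputable def Plow {T d : ℕ} (μ : Fin T → Fin d → Measure ℝ) (c : Path T d → ℝ) : ℝ :=
  sInf (primalVals c (MartSet μ))

/-- Wasserstein-1 distance on probability measures on `ℝ`. -/
noncomputable def W1R (μ ν : Measure ℝ) : ℝ :=
  sInf {r | ∃ γ : Measure (ℝ × ℝ), IsProbabilityMeasure γ ∧ γ.map Prod.fst = μ ∧
    γ.map Prod.snd = ν ∧ Integrable (fun p => |p.1 - p.2|) γ ∧
    r = ∫ p, |p.1 - p.2| ∂γ}

/-- Lipschitz continuity with respect to the `ℓ¹`-norm on the path space. -/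
def LipschitzCost {T d : ℕ} (L : ℝ) (c : Path T d → ℝ) : Prop :=
  ∀ x y, |c x - c y| ≤ L * ∑ t, ∑ i, |x t i - y t i|

/-- Weak convergence of a sequence of measures (testing against bounded continuous functions). -/
def WeakTendsto {T d : ℕ} (πs : ℕ → Measure (Path T d)) (π : Measure (Path T d)) : Prop :=
  ∀ f : BoundedContinuousFunction (Path T d) ℝ,
    Tendsto (fun n => ∫ x, f x ∂(πs n)) atTop (nhds (∫ x, f x ∂π))

/-- `π` is a weak limit point of the sequence `πs`. -/
def WeakLimitPoint {T d : ℕ} (πs : ℕ → Measure (Path T d)) (π : Measure (Path T d)) : Prop :=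
  ∃ φ : ℕ → ℕ, StrictMono φ ∧ WeakTendsto (πs ∘ φ) π

/-- Tightness of a sequence of measures. -/
def Tight {T d : ℕ} (πs : ℕ → Measure (Path T d)) : Prop :=
  ∀ δ : ℝ, 0 < δ → ∃ K : Set (Path T d), IsCompact K ∧ ∀ n, πs n Kᶜ ≤ ENNReal.ofReal δ

/-!
By duality, the martingale defect of `π` at time `t` is at most `ε` if and only if
`∑ᵢ E_π[hᵢ(X_0, …, X_t) (X_{t+1,i} - X_{t,i})] ≤ ε` for all continuous `hᵢ` with `|hᵢ| ≤ 1`. Along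
a weakly convergent sequence whose marginals converge in `W₁`, integrals of continuous functions of
linear growth converge. So these inequalities pass to the limit, and weak limits of elements of
`ℳ_{ε_n}(μ̌ⁿ)` with `ε_n → 0` are martingale measures. Conversely, moving every coordinate of a
martingale measure for `μ̌` independently along an optimal `W₁`-plan creates a defect of at most
`2 max_t ∑ᵢ W₁(μⁿ_{t,i}, μ_{t,i}) ≤ ε_n`, so every element of `ℳ(μ̌)` is a weak limit of elements of
`ℳ_{ε_n}(μ̌ⁿ)`. Compactness and these two facts give existence of optimizers and optimality of their
weak limit points.
-/

section ConditionalExpectation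

variable {Ω E : Type*} {mΩ : MeasurableSpace Ω} [mE : MeasurableSpace E] {P : Measure Ω}
  {φ : Ω → E} {Y : Ω → ℝ} {h : E → ℝ}

lemma integrable_comp_mul_of_abs_le_one (hφ : Measurable φ) (hY : Integrable Y P)
    (hh : Measurable h) (hb : ∀ x, |h x| ≤ 1) : Integrable (fun ω => h (φ ω) * Y ω) P :=
  hY.bdd_mul (hh.comp hφ).aestronglyMeasurable (ae_of_all _ fun ω => hb (φ ω))

lemma integral_comp_mul_condExp [IsFiniteMeasure P] (hφ : Measurable φ) (hY : Integrable Y P)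
    (hh : Measurable h) (hb : ∀ x, |h x| ≤ 1) :
    ∫ ω, h (φ ω) * (P[Y | mE.comap φ]) ω ∂P = ∫ ω, h (φ ω) * Y ω ∂P := by
  have pullOut := condExp_mul_of_stronglyMeasurable_left
    (f := fun ω => h (φ ω))
    (hh.comp (comap_measurable φ)).stronglyMeasurable
    (integrable_comp_mul_of_abs_le_one hφ hY hh hb) hY
  exact (integral_congr_ae pullOut).symm.trans (integral_condExp hφ.comap_le)

lemma integral_comp_mul_le_integral_abs_condExp [IsFiniteMeasure P] (hφ : Measurable φ)
    (hY : Integrable Y P) (hh : Measurable h) (hb : ∀ x, |h x| ≤ 1) :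
    ∫ ω, h (φ ω) * Y ω ∂P ≤ ∫ ω, |(P[Y | mE.comap φ]) ω| ∂P := by
  rw [← integral_comp_mul_condExp hφ hY hh hb]
  refine integral_mono (integrable_comp_mul_of_abs_le_one hφ integrable_condExp hh hb)
    integrable_condExp.abs fun ω => (le_abs_self _).trans ?_
  rw [abs_mul]
  exact mul_le_of_le_one_left (abs_nonneg _) (hb _)

lemma exists_integral_comp_mul_eq_integral_abs_condExp [IsFiniteMeasure P] (hφ : Measurable φ)
    (hY : Integrable Y P) :
    ∃ h : E → ℝ, Measurable h ∧ (∀ x, |h x| ≤ 1) ∧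
      ∫ ω, h (φ ω) * Y ω ∂P = ∫ ω, |(P[Y | mE.comap φ]) ω| ∂P := by
  have hcond : Measurable[mE.comap φ] (P[Y | mE.comap φ]) :=
    stronglyMeasurable_condExp.measurable
  obtain ⟨z, hz, hzφ⟩ := hcond.exists_eq_measurable_comp
  let sgn : E → ℝ := fun x => if 0 ≤ z x then 1 else -1
  have hsgn : Measurable sgn :=
    Measurable.ite (measurableSet_le measurable_const hz) measurable_const measurable_const
  have hsgn_le : ∀ x, |sgn x| ≤ 1 := fun x => by
    simp only [sgn]
    split_ifs <;> simp
  refine ⟨sgn, hsgn, hsgn_le, ?_⟩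
  rw [← integral_comp_mul_condExp hφ hY hsgn hsgn_le]
  refine integral_congr_ae (ae_of_all _ fun ω => ?_)
  simp only [hzφ, Function.comp_apply, sgn]
  split_ifs with hpos
  · rw [abs_of_nonneg hpos, one_mul]
  · rw [abs_of_neg (not_le.1 hpos), neg_one_mul]

lemma integral_map_withDensity_enorm (hφ : Measurable φ) (hY : Integrable Y P)
    (hh : Measurable h) :
    ∫ x, h x ∂((P.withDensity fun ω => ‖Y ω‖ₑ).map φ) = ∫ ω, ‖Y ω‖ * h (φ ω) ∂P := by
  rw [integral_map hφ.aemeasurable hh.aestronglyMeasurable,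
    integral_withDensity_eq_integral_toReal_smul₀ hY.1.enorm (ae_of_all _ fun ω => enorm_lt_top)]
  simp only [toReal_enorm, smul_eq_mul]

variable [TopologicalSpace E] [TopologicalSpace.PseudoMetrizableSpace E] [BorelSpace E]

lemma exists_continuous_abs_le_one_integral_norm_sub_le {ν : Measure E} [IsFiniteMeasure ν]
    (hh : Measurable h) (hb : ∀ x, |h x| ≤ 1) {δ : ℝ} (hδ : 0 < δ) :
    ∃ f : E → ℝ, Continuous f ∧ (∀ x, |f x| ≤ 1) ∧ ∫ x, ‖h x - f x‖ ∂ν ≤ δ := by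
  let := TopologicalSpace.pseudoMetrizableSpacePseudoMetric E
  have hint : Integrable h ν := .of_bound hh.aestronglyMeasurable 1 (ae_of_all _ hb)
  obtain ⟨f, hfδ, hf⟩ := hint.exists_boundedContinuous_integral_sub_le hδ
  let clip : ℝ → ℝ := fun y => Set.projIcc (-1) 1 (by norm_num) y
  refine ⟨fun x => clip (f x),
    continuous_subtype_val.comp (continuous_projIcc.comp f.continuous),
    fun x => abs_le.2 (Set.projIcc _ _ _ (f x)).2, le_trans ?_ hfδ⟩
  refine integral_mono_of_nonneg (ae_of_all _ fun x => norm_nonneg _) (hint.sub hf).norm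
    (ae_of_all _ fun x => ?_)
  have hclip : h x = clip (h x) :=
    (congrArg Subtype.val (Set.projIcc_of_mem _ (abs_le.1 (hb x)))).symm
  calc ‖h x - clip (f x)‖ = |clip (h x) - clip (f x)| := by rw [← hclip, Real.norm_eq_abs]
    _ ≤ ‖h x - f x‖ := Set.abs_projIcc_sub_projIcc _

lemma exists_continuous_integral_comp_mul_sub_le (hφ : Measurable φ) (hY : Integrable Y P)
    (hh : Measurable h) (hb : ∀ x, |h x| ≤ 1) {δ : ℝ} (hδ : 0 < δ) :
    ∃ f : E → ℝ, Continuous f ∧ (∀ x, |f x| ≤ 1) ∧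
      ∫ ω, h (φ ω) * Y ω ∂P - δ ≤ ∫ ω, f (φ ω) * Y ω ∂P := by
  have := isFiniteMeasure_withDensity (μ := P) (f := fun ω => ‖Y ω‖ₑ) hY.2.ne
  obtain ⟨f, hf, hfb, hfδ⟩ := exists_continuous_abs_le_one_integral_norm_sub_le
    (ν := (P.withDensity fun ω => ‖Y ω‖ₑ).map φ) hh hb hδ
  refine ⟨f, hf, hfb, sub_le_comm.1 ?_⟩
  calc ∫ ω, h (φ ω) * Y ω ∂P - ∫ ω, f (φ ω) * Y ω ∂P
      = ∫ ω, (h (φ ω) * Y ω - f (φ ω) * Y ω) ∂P :=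
        (integral_sub (integrable_comp_mul_of_abs_le_one hφ hY hh hb)
          (integrable_comp_mul_of_abs_le_one hφ hY hf.measurable hfb)).symm
    _ ≤ ∫ ω, ‖h (φ ω) * Y ω - f (φ ω) * Y ω‖ ∂P :=
        (le_abs_self _).trans abs_integral_le_integral_abs
    _ = ∫ ω, ‖Y ω‖ * ‖h (φ ω) - f (φ ω)‖ ∂P := by simp only [← sub_mul, norm_mul, mul_comm ‖Y _‖]
    _ = ∫ x, ‖h x - f x‖ ∂((P.withDensity fun ω => ‖Y ω‖ₑ).map φ) :=
        (integral_map_withDensity_enorm hφ hY (hh.sub hf.measurable).norm).symm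
    _ ≤ δ := hfδ

lemma exists_seq_continuous_tendsto_integral_abs_condExp [IsFiniteMeasure P] (hφ : Measurable φ)
    (hY : Integrable Y P) :
    ∃ f : ℕ → E → ℝ, (∀ n, Continuous (f n)) ∧ (∀ n x, |f n x| ≤ 1) ∧
      Tendsto (fun n => ∫ ω, f n (φ ω) * Y ω ∂P) atTop
        (nhds (∫ ω, |(P[Y | mE.comap φ]) ω| ∂P)) := by
  obtain ⟨h, hh, hb, heq⟩ := exists_integral_comp_mul_eq_integral_abs_condExp hφ hY
  choose f hf hfb hle using fun n : ℕ =>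
    exists_continuous_integral_comp_mul_sub_le hφ hY hh hb (Nat.one_div_pos_of_nat (n := n))
  refine ⟨f, hf, hfb, tendsto_of_tendsto_of_tendsto_of_le_of_le ?_ tendsto_const_nhds
    (fun n => heq ▸ hle n)
    fun n => integral_comp_mul_le_integral_abs_condExp hφ hY (hf n).measurable (hfb n)⟩
  simpa using tendsto_one_div_add_atTop_nhds_zero_nat.const_sub (∫ ω, |(P[Y | mE.comap φ]) ω| ∂P)

lemma sum_integral_abs_condExp_le_iff {ι : Type*} [Fintype ι] [IsFiniteMeasure P]
    (hφ : Measurable φ) {Y : ι → Ω → ℝ} (hY : ∀ i, Integrable (Y i) P) {ε : ℝ} :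
    ∑ i, ∫ ω, |(P[Y i | mE.comap φ]) ω| ∂P ≤ ε ↔
      ∀ h : ι → E → ℝ, (∀ i, Continuous (h i)) → (∀ i x, |h i x| ≤ 1) →
        ∑ i, ∫ ω, h i (φ ω) * Y i ω ∂P ≤ ε := by
  constructor
  · intro hε h hh hb
    exact (Finset.sum_le_sum fun i _ => integral_comp_mul_le_integral_abs_condExp hφ (hY i)
      (hh i).measurable (hb i)).trans hε
  · intro hε
    choose f hf hfb hlim using fun i =>
      exists_seq_continuous_tendsto_integral_abs_condExp hφ (hY i)
    exact le_of_tendsto' (tendsto_finsetSum _ fun i _ => hlim i)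
      fun n => hε (fun i => f i n) (fun i => hf i n) fun i => hfb i n

end ConditionalExpectation

lemma integral_comp_of_measurePreserving {α β : Type*} [MeasurableSpace α] [MeasurableSpace β]
    {μ : Measure α} {ν : Measure β} {f : α → β} (hf : MeasurePreserving f μ ν) {g : β → ℝ}
    (hg : AEStronglyMeasurable g ν) : ∫ x, g (f x) ∂μ = ∫ y, g y ∂ν := by
  rw [← hf.map_eq] at hg ⊢
  exact (integral_map hf.aemeasurable hg).symm

lemma isProbabilityMeasure_of_measurePreserving {α β : Type*} [MeasurableSpace α]
    [MeasurableSpace β] {μ : Measure α} {ν : Measure β} [IsProbabilityMeasure ν] {f : α → β}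
    (hf : MeasurePreserving f μ ν) : IsProbabilityMeasure μ := by
  have : IsProbabilityMeasure (μ.map f) := hf.map_eq ▸ inferInstance
  exact Measure.isProbabilityMeasure_of_map f

section WeakConvergence

variable {ι E : Type*} {l : Filter ι} [TopologicalSpace E] [MeasurableSpace E]
  [OpensMeasurableSpace E] {μs : ι → Measure E} {μ : Measure E}

lemma eventually_lt_integral_of_nonneg
    (hμ : ∀ f : BoundedContinuousFunction E ℝ,
      Tendsto (fun n => ∫ x, f x ∂(μs n)) l (nhds (∫ x, f x ∂μ)))
    {g : E → ℝ} (hg : Continuous g) (hg0 : ∀ x, 0 ≤ g x) (hgμs : ∀ n, Integrable g (μs n))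
    (hgμ : Integrable g μ) {a : ℝ} (ha : a < ∫ x, g x ∂μ) :
    ∀ᶠ n in l, a < ∫ x, g x ∂(μs n) := by
  have htrunc : Tendsto (fun M : ℕ => ∫ x, min (g x) M ∂μ) atTop (nhds (∫ x, g x ∂μ)) := by
    refine tendsto_integral_of_dominated_convergence g
      (fun M => (hg.min continuous_const).measurable.aestronglyMeasurable) hgμ
      (fun M => ae_of_all _ fun x => ?_) (ae_of_all _ fun x => ?_)
    · rw [Real.norm_of_nonneg (le_min (hg0 x) M.cast_nonneg)]
      exact min_le_left _ _
    · refine tendsto_const_nhds.congr' ?_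
      filter_upwards [eventually_ge_atTop ⌈g x⌉₊] with M hM
      exact (min_eq_left (Nat.ceil_le.1 hM)).symm
  obtain ⟨M, hM⟩ := (htrunc.eventually (lt_mem_nhds ha)).exists
  have hbound : ∀ x, ‖min (g x) M‖ ≤ M := fun x => by
    rw [Real.norm_of_nonneg (le_min (hg0 x) M.cast_nonneg)]
    exact min_le_right _ _
  let f : BoundedContinuousFunction E ℝ :=
    .ofNormedAddCommGroup (fun x => min (g x) M) (hg.min continuous_const) M hbound
  filter_upwards [(hμ f).eventually (lt_mem_nhds hM)] with n hn
  refine hn.trans_le (integral_mono_of_nonneg (ae_of_all _ fun x => ?_) (hgμs n)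
    (ae_of_all _ fun x => min_le_left _ _))
  exact le_min (hg0 x) M.cast_nonneg

/- The nonnegative function `w + f` is lower semicontinuous along `μs` and `w` is continuous along
`μs`, so that `f` is lower semicontinuous along `μs`. -/
lemma eventually_lt_integral_of_abs_le
    (hμ : ∀ f : BoundedContinuousFunction E ℝ,
      Tendsto (fun n => ∫ x, f x ∂(μs n)) l (nhds (∫ x, f x ∂μ)))
    {f w : E → ℝ} (hf : Continuous f) (hw : Continuous w) (hfw : ∀ x, |f x| ≤ w x)
    (hwμs : ∀ n, Integrable w (μs n)) (hwμ : Integrable w μ)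
    (hlim : Tendsto (fun n => ∫ x, w x ∂(μs n)) l (nhds (∫ x, w x ∂μ)))
    {a : ℝ} (ha : a < ∫ x, f x ∂μ) : ∀ᶠ n in l, a < ∫ x, f x ∂(μs n) := by
  have integrable_f : ∀ {ν : Measure E}, Integrable w ν → Integrable f ν := fun hwν =>
    hwν.mono' hf.measurable.aestronglyMeasurable (ae_of_all _ hfw)
  have hsum : ∀ {ν : Measure E}, Integrable w ν →
      ∫ x, (w x + f x) ∂ν = ∫ x, w x ∂ν + ∫ x, f x ∂ν :=
    fun hwν => integral_add hwν (integrable_f hwν)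
  obtain ⟨b, hab, hb⟩ := exists_between ha
  have hlower : ∀ᶠ n in l, ∫ x, w x ∂μ + b < ∫ x, (w x + f x) ∂(μs n) :=
    eventually_lt_integral_of_nonneg hμ (hw.add hf)
      (fun x => neg_le_iff_add_nonneg'.1 (abs_le.1 (hfw x)).1)
      (fun n => (hwμs n).add (integrable_f (hwμs n))) (hwμ.add (integrable_f hwμ))
      ((add_lt_add_right hb _).trans_eq (hsum hwμ).symm)
  have hupper : ∀ᶠ n in l, ∫ x, w x ∂(μs n) < ∫ x, w x ∂μ + (b - a) :=
    hlim.eventually (gt_mem_nhds (lt_add_of_pos_right _ (sub_pos.2 hab)))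
  filter_upwards [hlower, hupper] with n hn hwn
  rw [hsum (hwμs n)] at hn
  linarith

lemma tendsto_integral_of_abs_le
    (hμ : ∀ f : BoundedContinuousFunction E ℝ,
      Tendsto (fun n => ∫ x, f x ∂(μs n)) l (nhds (∫ x, f x ∂μ)))
    {f w : E → ℝ} (hf : Continuous f) (hw : Continuous w) (hfw : ∀ x, |f x| ≤ w x)
    (hwμs : ∀ n, Integrable w (μs n)) (hwμ : Integrable w μ)
    (hlim : Tendsto (fun n => ∫ x, w x ∂(μs n)) l (nhds (∫ x, w x ∂μ))) :
    Tendsto (fun n => ∫ x, f x ∂(μs n)) l (nhds (∫ x, f x ∂μ)) := by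
  refine tendsto_order.2 ⟨fun a ha =>
    eventually_lt_integral_of_abs_le hμ hf hw hfw hwμs hwμ hlim ha, fun a ha => ?_⟩
  have hneg := eventually_lt_integral_of_abs_le hμ hf.neg hw (fun x => (abs_neg _).trans_le (hfw x))
    hwμs hwμ hlim (a := -a) (by simpa only [Pi.neg_apply, integral_neg, neg_lt_neg_iff] using ha)
  simpa only [Pi.neg_apply, integral_neg, neg_lt_neg_iff] using hneg

end WeakConvergence

lemma measurePreserving_of_tendsto {ι E F : Type*} {l : Filter ι} [l.NeBot]
    [TopologicalSpace E] [MeasurableSpace E] [BorelSpace E]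
    [TopologicalSpace F] [MeasurableSpace F] [BorelSpace F] [HasOuterApproxClosed F]
    {f : E → F} (hf : Continuous f) {μs : ι → ProbabilityMeasure E} {μ : ProbabilityMeasure E}
    {νs : ι → ProbabilityMeasure F} {ν : ProbabilityMeasure F}
    (hμ : Tendsto μs l (nhds μ)) (hν : Tendsto νs l (nhds ν))
    (hf_pres : ∀ n, MeasurePreserving f (μs n : Measure E) (νs n : Measure F)) :
    MeasurePreserving f (μ : Measure E) (ν : Measure F) := by
  have hmap : ∀ n, (μs n).map hf.measurable.aemeasurable = νs n := fun n =>
    Subtype.ext (hf_pres n).map_eq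
  have hlim := ProbabilityMeasure.tendsto_map_of_tendsto_of_continuous μs μ hμ hf
  simp only [hmap] at hlim
  exact ⟨hf.measurable, congrArg ProbabilityMeasure.toMeasure (tendsto_nhds_unique hlim hν)⟩

section Tightness

variable {E : Type*} [MeasurableSpace E]

lemma isTightMeasureSet_of_lintegral_enorm_le [NormedAddCommGroup E] [ProperSpace E]
    [OpensMeasurableSpace E] {S : Set (Measure E)} {C : ENNReal} (hC : C ≠ ⊤)
    (hS : ∀ μ ∈ S, ∫⁻ x, ‖x‖ₑ ∂μ ≤ C) : IsTightMeasureSet S := by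
  have hdiv : Tendsto (fun r : ℝ => C / ENNReal.ofReal r) atTop (nhds 0) := by
    simpa using ENNReal.Tendsto.const_div ENNReal.tendsto_ofReal_atTop (Or.inr hC)
  refine isTightMeasureSet_of_tendsto_measure_norm_gt
    (tendsto_of_tendsto_of_tendsto_of_le_of_le' tendsto_const_nhds hdiv
      (Eventually.of_forall fun r => zero_le) ?_)
  filter_upwards [eventually_gt_atTop 0] with r hr
  refine iSup₂_le fun μ hμ => ?_
  calc μ {x | r < ‖x‖} ≤ μ {x | ENNReal.ofReal r ≤ ‖x‖ₑ} :=
        measure_mono fun x hx => by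
          rw [Set.mem_ofPred_eq, ← ofReal_norm]
          exact ENNReal.ofReal_le_ofReal (le_of_lt hx)
    _ ≤ (∫⁻ x, ‖x‖ₑ ∂μ) / ENNReal.ofReal r :=
        meas_ge_le_lintegral_div measurable_enorm.aemeasurable (ENNReal.ofReal_pos.2 hr).ne'
          ENNReal.ofReal_ne_top
    _ ≤ C / ENNReal.ofReal r := ENNReal.div_le_div_right (hS μ hμ) _

variable [TopologicalSpace E] [TopologicalSpace.MetrizableSpace E]
  [TopologicalSpace.SeparableSpace E] [BorelSpace E]

lemma exists_subseq_tendsto_of_isTightMeasureSet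
    {μs : ℕ → ProbabilityMeasure E}
    (hμs : IsTightMeasureSet (Set.range fun n => (μs n : Measure E))) :
    ∃ μ : ProbabilityMeasure E, ∃ φ : ℕ → ℕ, StrictMono φ ∧ Tendsto (μs ∘ φ) atTop (nhds μ) := by
  have hcompact : IsCompact (closure (Set.range μs)) :=
    isCompact_closure_of_isTightMeasureSet
      (hμs.subset (by rintro _ ⟨_, ⟨n, rfl⟩, rfl⟩; exact ⟨n, rfl⟩))
  obtain ⟨μ, -, φ, hφ, hμ⟩ := hcompact.tendsto_subseq fun n => subset_closure ⟨n, rfl⟩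
  exact ⟨μ, φ, hφ, hμ⟩

lemma tendsto_of_isTightMeasureSet_of_forall_subseq
    {μs : ℕ → ProbabilityMeasure E} {μ : ProbabilityMeasure E}
    (hμs : IsTightMeasureSet (Set.range fun n => (μs n : Measure E)))
    (huniq : ∀ (ν : ProbabilityMeasure E) (φ : ℕ → ℕ), StrictMono φ →
      Tendsto (μs ∘ φ) atTop (nhds ν) → ν = μ) :
    Tendsto μs atTop (nhds μ) := by
  refine tendsto_of_subseq_tendsto fun ψ hψ => ?_
  obtain ⟨θ, -, hθ⟩ := strictMono_subseq_of_tendsto_atTop hψ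
  obtain ⟨ν, φ, hφ, hν⟩ := exists_subseq_tendsto_of_isTightMeasureSet (μs := μs ∘ ψ ∘ θ)
    (hμs.subset (Set.range_subset_iff.2 fun n => ⟨_, rfl⟩))
  exact ⟨θ ∘ φ, huniq ν _ (hθ.comp hφ) hν ▸ hν⟩

end Tightness

section Wasserstein

lemma integrable_of_lipschitzWith {E : Type*} [NormedAddCommGroup E] [MeasurableSpace E]
    [OpensMeasurableSpace E] {ρ : Measure E} [IsFiniteMeasure ρ] (hρ : Integrable (fun x => x) ρ)
    {g : E → ℝ} {K : NNReal} (hg : LipschitzWith K g) : Integrable g ρ :=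
  ((integrable_const ‖g 0‖).add (hρ.norm.const_mul K)).mono'
    hg.continuous.measurable.aestronglyMeasurable (ae_of_all _ fun x =>
      (norm_le_norm_add_norm_sub' (g x) (g 0)).trans
        (add_le_add_right (by simpa using hg.norm_sub_le x 0) _))

/-- `γ` is a coupling (transport plan) of `μ` and `ν`: its two marginals are `μ` and `ν`. -/
structure IsCoupling {α β : Type*} [MeasurableSpace α] [MeasurableSpace β]
    (γ : Measure (α × β)) (μ : Measure α) (ν : Measure β) : Prop where
  fst : MeasurePreserving Prod.fst γ μ
  snd : MeasurePreserving Prod.snd γ ν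

namespace IsCoupling

lemma prod {α β : Type*} [MeasurableSpace α] [MeasurableSpace β] (μ : Measure α) (ν : Measure β)
    [IsProbabilityMeasure μ] [IsProbabilityMeasure ν] : IsCoupling (μ.prod ν) μ ν :=
  ⟨measurePreserving_fst, measurePreserving_snd⟩

lemma swap {α β : Type*} [MeasurableSpace α] [MeasurableSpace β] {γ : Measure (α × β)}
    {μ : Measure α} {ν : Measure β} (hγ : IsCoupling γ μ ν) : IsCoupling (γ.map Prod.swap) ν μ where
  fst := ⟨measurable_fst, (Measure.map_map measurable_fst measurable_swap).trans hγ.snd.map_eq⟩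
  snd := ⟨measurable_snd, (Measure.map_map measurable_snd measurable_swap).trans hγ.fst.map_eq⟩

lemma of_tendsto {ι α β : Type*} {l : Filter ι} [l.NeBot] [TopologicalSpace α]
    [SecondCountableTopology α] [MeasurableSpace α] [BorelSpace α] [HasOuterApproxClosed α]
    [TopologicalSpace β] [SecondCountableTopology β] [MeasurableSpace β] [BorelSpace β]
    [HasOuterApproxClosed β] {γs : ι → ProbabilityMeasure (α × β)} {γ : ProbabilityMeasure (α × β)}
    {μ : ProbabilityMeasure α} {ν : ProbabilityMeasure β} (hγ : Tendsto γs l (nhds γ))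
    (hγs : ∀ n, IsCoupling (γs n : Measure (α × β)) (μ : Measure α) (ν : Measure β)) :
    IsCoupling (γ : Measure (α × β)) (μ : Measure α) (ν : Measure β) :=
  ⟨measurePreserving_of_tendsto continuous_fst hγ tendsto_const_nhds fun n => (hγs n).fst,
    measurePreserving_of_tendsto continuous_snd hγ tendsto_const_nhds fun n => (hγs n).snd⟩

lemma abs_integral_sub_integral_le {E : Type*} [NormedAddCommGroup E] [MeasurableSpace E]
    [OpensMeasurableSpace E] {μ ν : Measure E} {γ : Measure (E × E)} [IsFiniteMeasure μ]
    [IsFiniteMeasure ν] (hγ : IsCoupling γ μ ν) (hμ : Integrable (fun x => x) μ)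
    (hν : Integrable (fun x => x) ν) {g : E → ℝ} {K : NNReal} (hg : LipschitzWith K g) :
    |∫ x, g x ∂μ - ∫ x, g x ∂ν| ≤ K * ∫ p, ‖p.1 - p.2‖ ∂γ := by
  have hgμ := integrable_of_lipschitzWith hμ hg
  have hgν := integrable_of_lipschitzWith hν hg
  have hfst : Integrable (fun p : E × E => g p.1) γ := hγ.fst.integrable_comp_of_integrable hgμ
  have hsnd : Integrable (fun p : E × E => g p.2) γ := hγ.snd.integrable_comp_of_integrable hgν
  have hdist : Integrable (fun p : E × E => ‖p.1 - p.2‖) γ :=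
    ((hγ.fst.integrable_comp_of_integrable hμ).sub (hγ.snd.integrable_comp_of_integrable hν)).norm
  rw [← integral_const_mul, ← integral_comp_of_measurePreserving hγ.fst hgμ.1,
    ← integral_comp_of_measurePreserving hγ.snd hgν.1, ← integral_sub hfst hsnd]
  exact norm_integral_le_of_norm_le (f := fun p : E × E => g p.1 - g p.2)
    (hdist.const_mul (K : ℝ)) (ae_of_all _ fun p => hg.norm_sub_le p.1 p.2)

variable {μ ν : Measure ℝ} {γ : Measure (ℝ × ℝ)}

lemma integrable_abs_fst (hγ : IsCoupling γ μ ν) (hμ : Integrable (fun y => y) μ) :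
    Integrable (fun p => |p.1|) γ :=
  (hγ.fst.integrable_comp_of_integrable hμ).abs

lemma integrable_abs_snd (hγ : IsCoupling γ μ ν) (hν : Integrable (fun y => y) ν) :
    Integrable (fun p => |p.2|) γ :=
  (hγ.snd.integrable_comp_of_integrable hν).abs

lemma integrable_abs_sub (hγ : IsCoupling γ μ ν) (hμ : Integrable (fun y => y) μ)
    (hν : Integrable (fun y => y) ν) : Integrable (fun p => |p.1 - p.2|) γ :=
  ((hγ.fst.integrable_comp_of_integrable hμ).sub (hγ.snd.integrable_comp_of_integrable hν)).abs

lemma integral_abs_add_abs (hγ : IsCoupling γ μ ν) (hμ : Integrable (fun y => y) μ)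
    (hν : Integrable (fun y => y) ν) :
    ∫ p, (|p.1| + |p.2|) ∂γ = ∫ y, |y| ∂μ + ∫ y, |y| ∂ν := by
  rw [integral_add (hγ.integrable_abs_fst hμ) (hγ.integrable_abs_snd hν),
    integral_comp_of_measurePreserving hγ.fst (g := fun y => |y|) hμ.abs.1,
    integral_comp_of_measurePreserving hγ.snd (g := fun y => |y|) hν.abs.1]

lemma lintegral_enorm_le (hγ : IsCoupling γ μ ν) :
    ∫⁻ p, ‖p‖ₑ ∂γ ≤ ∫⁻ y, ‖y‖ₑ ∂μ + ∫⁻ y, ‖y‖ₑ ∂ν :=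
  calc ∫⁻ p, ‖p‖ₑ ∂γ ≤ ∫⁻ p, (‖p.1‖ₑ + ‖p.2‖ₑ) ∂γ := by
        refine lintegral_mono fun p => ?_
        simp only [enorm_eq_nnnorm, Prod.nnnorm_def]
        exact_mod_cast max_le le_self_add le_add_self
    _ = ∫⁻ y, ‖y‖ₑ ∂μ + ∫⁻ y, ‖y‖ₑ ∂ν := by
        rw [lintegral_add_left (by fun_prop),
          hγ.fst.lintegral_comp (f := fun y => ‖y‖ₑ) (by fun_prop),
          hγ.snd.lintegral_comp (f := fun y => ‖y‖ₑ) (by fun_prop)]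

end IsCoupling

variable {μ ν : Measure ℝ}

lemma W1R_eq_sInf_image [IsProbabilityMeasure μ] (hμ : Integrable (fun y => y) μ)
    (hν : Integrable (fun y => y) ν) :
    W1R μ ν =
      sInf ((fun γ : Measure (ℝ × ℝ) => ∫ p, |p.1 - p.2| ∂γ) '' {γ | IsCoupling γ μ ν}) := by
  refine congrArg sInf (Set.ext fun r => ⟨?_, ?_⟩)
  · rintro ⟨γ, -, hfst, hsnd, -, rfl⟩
    exact ⟨γ, ⟨⟨measurable_fst, hfst⟩, ⟨measurable_snd, hsnd⟩⟩, rfl⟩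
  · rintro ⟨γ, hγ, rfl⟩
    exact ⟨γ, isProbabilityMeasure_of_measurePreserving hγ.fst, hγ.fst.map_eq, hγ.snd.map_eq,
      hγ.integrable_abs_sub hμ hν, rfl⟩

lemma bddBelow_image_integral_abs_sub (S : Set (Measure (ℝ × ℝ))) :
    BddBelow ((fun γ : Measure (ℝ × ℝ) => ∫ p, |p.1 - p.2| ∂γ) '' S) :=
  ⟨0, Set.forall_mem_image.2 fun _ _ => integral_nonneg fun _ => abs_nonneg _⟩

lemma W1R_nonneg (μ ν : Measure ℝ) : 0 ≤ W1R μ ν := by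
  refine Real.sInf_nonneg ?_
  rintro _ ⟨γ, -, -, -, -, rfl⟩
  exact integral_nonneg fun p => abs_nonneg _

lemma W1R_self [IsProbabilityMeasure μ] (hμ : Integrable (fun y => y) μ) : W1R μ μ = 0 := by
  have diag : IsCoupling (μ.map fun y => (y, y)) μ μ :=
    ⟨⟨measurable_fst, by rw [Measure.map_map (by fun_prop) (by fun_prop)]; exact Measure.map_id⟩,
      ⟨measurable_snd, by rw [Measure.map_map (by fun_prop) (by fun_prop)]; exact Measure.map_id⟩⟩
  refine le_antisymm ?_ (W1R_nonneg μ μ)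
  rw [W1R_eq_sInf_image hμ hμ]
  refine csInf_le (bddBelow_image_integral_abs_sub _) ⟨_, diag, ?_⟩
  simp only
  rw [integral_map (by fun_prop) (by fun_prop)]
  simp

variable [IsProbabilityMeasure μ] [IsProbabilityMeasure ν]

/-- Optimal plans exist: a minimizing sequence of plans is tight, and along it `|x - y|` passes to
the limit because the integral of the dominating function `|x| + |y|` is the same for all plans. -/
theorem exists_isCoupling_integral_abs_sub_eq_W1R (hμ : Integrable (fun y => y) μ)
    (hν : Integrable (fun y => y) ν) :
    ∃ γ, IsCoupling γ μ ν ∧ ∫ p, |p.1 - p.2| ∂γ = W1R μ ν := by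
  have hne : {γ | IsCoupling γ μ ν}.Nonempty := ⟨_, IsCoupling.prod μ ν⟩
  obtain ⟨u, -, hu, hmem⟩ := exists_seq_tendsto_sInf (hne.image _)
    (bddBelow_image_integral_abs_sub {γ | IsCoupling γ μ ν})
  rw [← W1R_eq_sInf_image hμ hν] at hu
  choose γs hγs hγsu using hmem
  let Γs : ℕ → ProbabilityMeasure (ℝ × ℝ) := fun n =>
    ⟨γs n, isProbabilityMeasure_of_measurePreserving (hγs n).fst⟩
  have htight : IsTightMeasureSet (Set.range fun n => (Γs n : Measure (ℝ × ℝ))) :=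
    isTightMeasureSet_of_lintegral_enorm_le (ENNReal.add_ne_top.2 ⟨hμ.2.ne, hν.2.ne⟩)
      (Set.forall_mem_range.2 fun n => (hγs n).lintegral_enorm_le)
  obtain ⟨Γ, φ, hφ, hΓ⟩ := exists_subseq_tendsto_of_isTightMeasureSet htight
  have hΓc : IsCoupling (Γ : Measure (ℝ × ℝ)) μ ν :=
    .of_tendsto (μ := ⟨μ, ‹_›⟩) (ν := ⟨ν, ‹_›⟩) hΓ fun n => hγs (φ n)
  have hlim : Tendsto (fun n => ∫ p, |p.1 - p.2| ∂(γs (φ n))) atTop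
      (nhds (∫ p, |p.1 - p.2| ∂(Γ : Measure (ℝ × ℝ)))) := by
    refine tendsto_integral_of_abs_le (μs := fun n => γs (φ n))
      (w := fun p : ℝ × ℝ => |p.1| + |p.2|)
      (ProbabilityMeasure.tendsto_iff_forall_integral_tendsto.1 hΓ) (by fun_prop) (by fun_prop)
      (fun p => (abs_abs _).trans_le (abs_sub _ _))
      (fun n => ((hγs _).integrable_abs_fst hμ).add ((hγs _).integrable_abs_snd hν))
      ((hΓc.integrable_abs_fst hμ).add (hΓc.integrable_abs_snd hν)) ?_
    simp only [(hγs _).integral_abs_add_abs hμ hν, hΓc.integral_abs_add_abs hμ hν,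
      tendsto_const_nhds]
  refine ⟨Γ, hΓc, tendsto_nhds_unique hlim ?_⟩
  exact (hu.comp hφ.tendsto_atTop).congr fun n => (hγsu (φ n)).symm

lemma abs_integral_sub_integral_le_mul_W1R (hμ : Integrable (fun y => y) μ)
    (hν : Integrable (fun y => y) ν) {g : ℝ → ℝ} {K : NNReal} (hg : LipschitzWith K g) :
    |∫ y, g y ∂μ - ∫ y, g y ∂ν| ≤ K * W1R μ ν := by
  obtain ⟨γ, hγ, hγW⟩ := exists_isCoupling_integral_abs_sub_eq_W1R hμ hν
  exact hγW ▸ hγ.abs_integral_sub_integral_le hμ hν hg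

lemma tendsto_integral_of_tendsto_W1R {νs : ℕ → Measure ℝ}
    [∀ n, IsProbabilityMeasure (νs n)] (hνs : ∀ n, Integrable (fun y => y) (νs n))
    (hμ : Integrable (fun y => y) μ) (hW : Tendsto (fun n => W1R (νs n) μ) atTop (nhds 0))
    {g : ℝ → ℝ} {K : NNReal} (hg : LipschitzWith K g) :
    Tendsto (fun n => ∫ y, g y ∂(νs n)) atTop (nhds (∫ y, g y ∂μ)) := by
  rw [tendsto_iff_dist_tendsto_zero]
  exact squeeze_zero (fun n => dist_nonneg)
    (fun n => abs_integral_sub_integral_le_mul_W1R (hνs n) hμ hg) (by simpa using hW.const_mul ↑K)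

lemma tendsto_probabilityMeasure_of_tendsto_W1R {νs : ℕ → ProbabilityMeasure ℝ}
    {μ : ProbabilityMeasure ℝ} (hνs : ∀ n, Integrable (fun y => y) (νs n : Measure ℝ))
    (hμ : Integrable (fun y => y) (μ : Measure ℝ))
    (hW : Tendsto (fun n => W1R (νs n) μ) atTop (nhds 0)) : Tendsto νs atTop (nhds μ) :=
  tendsto_iff_forall_lipschitz_integral_tendsto.2 fun _ _ ⟨_, hg⟩ =>
    tendsto_integral_of_tendsto_W1R hνs hμ hW hg

/-- Coordinatewise `W₁`-convergence of a sequence of systems of one-dimensional marginals, all of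
them probability measures with finite first moment. -/
structure W1Tendsto {T d : ℕ} (νs : ℕ → Fin T → Fin d → Measure ℝ) (μ : Fin T → Fin d → Measure ℝ) :
    Prop where
  isProbabilityMeasure_seq : ∀ n t i, IsProbabilityMeasure (νs n t i)
  isProbabilityMeasure_lim : ∀ t i, IsProbabilityMeasure (μ t i)
  integrable_seq : ∀ n t i, Integrable (fun y => y) (νs n t i)
  integrable_lim : ∀ t i, Integrable (fun y => y) (μ t i)
  tendsto_W1R : ∀ t i, Tendsto (fun n => W1R (νs n t i) (μ t i)) atTop (nhds 0)

namespace W1Tendsto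

variable {T d : ℕ} {νs : ℕ → Fin T → Fin d → Measure ℝ} {μ : Fin T → Fin d → Measure ℝ}

lemma comp_strictMono (h : W1Tendsto νs μ) {φ : ℕ → ℕ} (hφ : StrictMono φ) :
    W1Tendsto (νs ∘ φ) μ where
  isProbabilityMeasure_seq n := h.isProbabilityMeasure_seq (φ n)
  isProbabilityMeasure_lim := h.isProbabilityMeasure_lim
  integrable_seq n := h.integrable_seq (φ n)
  integrable_lim := h.integrable_lim
  tendsto_W1R t i := (h.tendsto_W1R t i).comp hφ.tendsto_atTop

lemma const (hprob : ∀ t i, IsProbabilityMeasure (μ t i))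
    (hmom : ∀ t i, Integrable (fun y => y) (μ t i)) : W1Tendsto (fun _ => μ) μ where
  isProbabilityMeasure_seq _ := hprob
  isProbabilityMeasure_lim := hprob
  integrable_seq _ := hmom
  integrable_lim := hmom
  tendsto_W1R t i := by simp only [W1R_self (hmom t i), tendsto_const_nhds]

end W1Tendsto

end Wasserstein

section ProductKernel

open ProbabilityTheory

lemma measurePreserving_prodMap_compProd {α α' β β' : Type*} [MeasurableSpace α]
    [MeasurableSpace α'] [MeasurableSpace β] [MeasurableSpace β'] {μ : Measure α} {μ' : Measure α'}
    [SFinite μ] [SFinite μ'] {κ : Kernel α β} {κ' : Kernel α' β'} [IsSFiniteKernel κ]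
    [IsSFiniteKernel κ'] {f : α → α'} {g : β → β'} (hf : MeasurePreserving f μ μ')
    (hg : Measurable g) (hκ : ∀ x, (κ x).map g = κ' (f x)) :
    MeasurePreserving (Prod.map f g) (μ ⊗ₘ κ) (μ' ⊗ₘ κ') := by
  have hfg : Measurable (Prod.map f g) := hf.measurable.prodMap hg
  refine ⟨hfg, Measure.ext fun s hs => ?_⟩
  rw [Measure.map_apply hfg hs, Measure.compProd_apply (hfg hs), Measure.compProd_apply hs,
    ← hf.lintegral_comp (Kernel.measurable_kernel_prodMk_left hs)]
  refine lintegral_congr fun x => ?_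
  rw [← hκ, Measure.map_apply hg (measurable_prodMk_left hs)]
  rfl

lemma measurePreserving_subtypeRestrict_pi {ι : Type*} [Fintype ι] {X : ι → Type*}
    [∀ i, MeasurableSpace (X i)] (μ : ∀ i, Measure (X i)) [∀ i, IsProbabilityMeasure (μ i)]
    (p : ι → Prop) [DecidablePred p] :
    MeasurePreserving (Subtype.restrict p) (Measure.pi μ) (Measure.pi fun i : Subtype p => μ i) :=
  measurePreserving_fst.comp (measurePreserving_piEquivPiSubtypeProd μ p)

variable {ι : Type*} [Fintype ι] {X Y : ι → Type*} [∀ i, MeasurableSpace (X i)]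
  [∀ i, MeasurableSpace (Y i)]

/-- The product of finitely many Markov kernels, which moves the coordinates independently of each
other. -/
noncomputable def piKernel (κ : ∀ i, Kernel (X i) (Y i)) [∀ i, IsMarkovKernel (κ i)] :
    Kernel (∀ i, X i) (∀ i, Y i) where
  toFun x := Measure.pi fun i => κ i (x i)
  measurable' := by
    refine Measurable.measure_of_isPiSystem_of_isProbabilityMeasure generateFrom_pi.symm
      isPiSystem_pi ?_
    rintro _ ⟨s, hs, rfl⟩
    simp only [Measure.pi_pi]
    exact Finset.measurable_prod _ fun i _ =>
      ((κ i).measurable_coe (hs i trivial)).comp (measurable_pi_apply i)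

variable (κ : ∀ i, Kernel (X i) (Y i)) [∀ i, IsMarkovKernel (κ i)]

lemma piKernel_apply (x : ∀ i, X i) : piKernel κ x = Measure.pi fun i => κ i (x i) := rfl

instance isMarkovKernel_piKernel : IsMarkovKernel (piKernel κ) :=
  ⟨fun x => by rw [piKernel_apply]; infer_instance⟩

lemma measurePreserving_eval_piKernel (x : ∀ i, X i) (i : ι) :
    MeasurePreserving (Function.eval i) (piKernel κ x) (κ i (x i)) :=
  measurePreserving_eval (fun i => κ i (x i)) i

lemma measurePreserving_subtypeRestrict_piKernel (p : ι → Prop) [DecidablePred p] (x : ∀ i, X i) :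
    MeasurePreserving (Subtype.restrict p) (piKernel κ x)
      (piKernel (fun i : Subtype p => κ i) (Subtype.restrict p x)) :=
  measurePreserving_subtypeRestrict_pi (fun i => κ i (x i)) p

end ProductKernel

section Martingale

variable {T d : ℕ}

lemma HasMarginals.measurePreserving {π : Measure (Path T d)} {μ : Fin T → Fin d → Measure ℝ}
    (h : HasMarginals π μ) (t : Fin T) (i : Fin d) :
    MeasurePreserving (fun x => x t i) π (μ t i) :=
  ⟨by fun_prop, h t i⟩

lemma HasMarginals.integrable {π : Measure (Path T d)} {μ : Fin T → Fin d → Measure ℝ}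
    (h : HasMarginals π μ) (hμ : ∀ t i, Integrable (fun y => y) (μ t i)) (t : Fin T) (i : Fin d) :
    Integrable (fun x => x t i) π :=
  (h.measurePreserving t i).integrable_comp_of_integrable (hμ t i)

/-- The path up to time `t`, as a map generating `pastSigma T d t`. -/
def past (T d t : ℕ) : Path T d → ({s : Fin T // (s : ℕ) ≤ t} → Fin d → ℝ) :=
  Subtype.restrict _

/-- The increment `X_{t+1,i} - X_{t,i}`. -/
def increment {t : ℕ} (ht : t + 1 < T) (i : Fin d) (x : Path T d) : ℝ :=
  x ⟨t + 1, ht⟩ i - x ⟨t, Nat.lt_of_succ_lt ht⟩ i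

lemma continuous_past (t : ℕ) : Continuous (past T d t) :=
  continuous_pi fun s => continuous_apply s.1

lemma continuous_increment {t : ℕ} (ht : t + 1 < T) (i : Fin d) :
    Continuous (increment ht i : Path T d → ℝ) := by
  unfold increment
  fun_prop

lemma pastSigma_eq_comap_past (t : ℕ) :
    pastSigma T d t = MeasurableSpace.comap (past T d t) inferInstance := by
  simp only [pastSigma, MeasurableSpace.pi, MeasurableSpace.comap_iSup, MeasurableSpace.comap_comp,
    iSup_subtype]
  rfl

variable {π : Measure (Path T d)}

lemma integrable_increment (hπ : ∀ s i, Integrable (fun x : Path T d => x s i) π) {t : ℕ}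
    (ht : t + 1 < T) (i : Fin d) : Integrable (increment ht i) π :=
  (hπ _ i).sub (hπ _ i)

lemma integrable_abs_condNext_sub (hπ : ∀ s i, Integrable (fun x : Path T d => x s i) π) {t : ℕ}
    (ht : t + 1 < T) (i : Fin d) :
    Integrable (fun x => |condNext π t ht i x - x ⟨t, Nat.lt_of_succ_lt ht⟩ i|) π :=
  (integrable_condExp.sub (hπ _ i)).abs

lemma martSetEps_zero_subset {μ : Fin T → Fin d → Measure ℝ}
    (hμ : ∀ t i, Integrable (fun y => y) (μ t i)) : MartSetEps μ 0 ⊆ MartSet μ := by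
  rintro π ⟨hprob, hmarg, hdefect⟩
  refine ⟨hprob, hmarg, fun t ht i => ?_⟩
  have hsum := (integral_eq_zero_iff_of_nonneg
    (fun x => Finset.sum_nonneg fun i _ => abs_nonneg _)
    (integrable_finsetSum Finset.univ fun i _ =>
      integrable_abs_condNext_sub (hmarg.integrable hμ) ht i)).1
      ((hdefect t ht).antisymm (integral_nonneg fun x => Finset.sum_nonneg fun i _ => abs_nonneg _))
  filter_upwards [hsum] with x hx
  exact sub_eq_zero.1 (abs_eq_zero.1
    ((Finset.sum_eq_zero_iff_of_nonneg fun i _ => abs_nonneg _).1 hx i (Finset.mem_univ i)))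

variable [IsFiniteMeasure π]

lemma condNext_sub_ae_eq_condExp_increment (hπ : ∀ s i, Integrable (fun x : Path T d => x s i) π)
    {t : ℕ} (ht : t + 1 < T) (i : Fin d) :
    (fun x => condNext π t ht i x - x ⟨t, Nat.lt_of_succ_lt ht⟩ i) =ᵐ[π]
      π[increment ht i | MeasurableSpace.comap (past T d t) inferInstance] := by
  have hpast : Measurable (past T d t) := (continuous_past t).measurable
  have hcoord : StronglyMeasurable[MeasurableSpace.comap (past T d t) inferInstance]
      fun x : Path T d => x ⟨t, Nat.lt_of_succ_lt ht⟩ i := by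
    have hrestrict : Measurable fun z : {s : Fin T // (s : ℕ) ≤ t} → Fin d → ℝ =>
        z ⟨⟨t, Nat.lt_of_succ_lt ht⟩, le_rfl⟩ i := by
      fun_prop
    exact (hrestrict.comp (comap_measurable _)).stronglyMeasurable
  refine EventuallyEq.symm ?_
  refine (condExp_sub (hπ ⟨t + 1, ht⟩ i) (hπ ⟨t, Nat.lt_of_succ_lt ht⟩ i) _).trans ?_
  rw [condExp_of_stronglyMeasurable hpast.comap_le hcoord (hπ _ i), ← pastSigma_eq_comap_past]
  rfl

lemma integral_sum_abs_condNext_sub (hπ : ∀ s i, Integrable (fun x : Path T d => x s i) π)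
    {t : ℕ} (ht : t + 1 < T) :
    ∫ x, ∑ i, |condNext π t ht i x - x ⟨t, Nat.lt_of_succ_lt ht⟩ i| ∂π =
      ∑ i, ∫ x, |(π[increment ht i | MeasurableSpace.comap (past T d t) inferInstance]) x| ∂π := by
  rw [integral_finsetSum _ fun i _ => integrable_abs_condNext_sub hπ ht i]
  refine Finset.sum_congr rfl fun i _ => integral_congr_ae ?_
  filter_upwards [condNext_sub_ae_eq_condExp_increment hπ ht i] with x hx
  rw [hx]

theorem integral_sum_abs_condNext_sub_le_iff
    (hπ : ∀ s i, Integrable (fun x : Path T d => x s i) π) {t : ℕ} (ht : t + 1 < T) {ε : ℝ} :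
    ∫ x, ∑ i, |condNext π t ht i x - x ⟨t, Nat.lt_of_succ_lt ht⟩ i| ∂π ≤ ε ↔
      ∀ h : Fin d → ({s : Fin T // (s : ℕ) ≤ t} → Fin d → ℝ) → ℝ,
        (∀ i, Continuous (h i)) → (∀ i z, |h i z| ≤ 1) →
          ∑ i, ∫ x, h i (past T d t x) * increment ht i x ∂π ≤ ε := by
  rw [integral_sum_abs_condNext_sub hπ ht]
  exact sum_integral_abs_condExp_le_iff (continuous_past t).measurable
    fun i => integrable_increment hπ ht i

lemma IsMartingaleMeasure.integral_comp_past_mul_increment (hmart : IsMartingaleMeasure π)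
    (hπ : ∀ s i, Integrable (fun x : Path T d => x s i) π) {t : ℕ} (ht : t + 1 < T) (i : Fin d)
    {h : ({s : Fin T // (s : ℕ) ≤ t} → Fin d → ℝ) → ℝ} (hh : Measurable h)
    (hb : ∀ z, |h z| ≤ 1) : ∫ x, h (past T d t x) * increment ht i x ∂π = 0 := by
  rw [← integral_comp_mul_condExp (continuous_past t).measurable (integrable_increment hπ ht i) hh
    hb]
  refine integral_eq_zero_of_ae ?_
  filter_upwards [condNext_sub_ae_eq_condExp_increment hπ ht i, hmart t ht i] with x hx hx0
  rw [← hx, hx0, sub_self, mul_zero, Pi.zero_apply]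

end Martingale

section Transport

open ProbabilityTheory

variable {T d : ℕ} {ρ : Measure (Path T d)}

/-- The coupling which moves all coordinates of a path with law `ρ` independently of each other,
the coordinate `(t, i)` according to the transport plan `γ t i`. -/
noncomputable def coordinatewiseTransport (ρ : Measure (Path T d))
    (γ : Fin T → Fin d → Measure (ℝ × ℝ)) [∀ t i, IsFiniteMeasure (γ t i)] :
    Measure (Path T d × Path T d) :=
  ρ ⊗ₘ piKernel fun t => piKernel fun i => (γ t i).condKernel

variable {γ : Fin T → Fin d → Measure (ℝ × ℝ)} {μ ν : Fin T → Fin d → Measure ℝ}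

section

variable [∀ t i, IsFiniteMeasure (γ t i)]

lemma measurePreserving_fst_coordinatewiseTransport [SFinite ρ] :
    MeasurePreserving Prod.fst (coordinatewiseTransport ρ γ) ρ :=
  ⟨measurable_fst, Measure.fst_compProd _ _⟩

lemma measurePreserving_coord_coordinatewiseTransport [IsFiniteMeasure ρ]
    (hρ : HasMarginals ρ μ) (hγ : ∀ t i, IsCoupling (γ t i) (μ t i) (ν t i))
    (t : Fin T) (i : Fin d) :
    MeasurePreserving (fun p => (p.1 t i, p.2 t i)) (coordinatewiseTransport ρ γ) (γ t i) := by
  have hfst : (γ t i).fst = μ t i := (hγ t i).fst.map_eq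
  have hdis : μ t i ⊗ₘ (γ t i).condKernel = γ t i :=
    hfst ▸ (γ t i).disintegrate (γ t i).condKernel
  have : IsFiniteMeasure (μ t i) := hfst ▸ inferInstance
  conv_rhs => rw [← hdis]
  refine measurePreserving_prodMap_compProd (g := fun y : Path T d => y t i)
    (hρ.measurePreserving t i) (by fun_prop) fun x => ?_
  exact ((measurePreserving_eval_piKernel (fun i => (γ t i).condKernel) (x t) i).comp
    (measurePreserving_eval_piKernel (fun t => piKernel fun i => (γ t i).condKernel) x t)).map_eq

lemma integral_abs_sub_coordinatewiseTransport [IsFiniteMeasure ρ] (hρ : HasMarginals ρ μ)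
    (hγ : ∀ t i, IsCoupling (γ t i) (μ t i) (ν t i)) (t : Fin T) (i : Fin d) :
    ∫ p, |p.1 t i - p.2 t i| ∂(coordinatewiseTransport ρ γ) = ∫ q, |q.1 - q.2| ∂(γ t i) :=
  integral_comp_of_measurePreserving (measurePreserving_coord_coordinatewiseTransport hρ hγ t i)
    (g := fun q => |q.1 - q.2|) (by fun_prop)

lemma hasMarginals_map_snd_coordinatewiseTransport [IsFiniteMeasure ρ] (hρ : HasMarginals ρ μ)
    (hγ : ∀ t i, IsCoupling (γ t i) (μ t i) (ν t i)) :
    HasMarginals ((coordinatewiseTransport ρ γ).map Prod.snd) ν := fun t i => by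
  rw [Measure.map_map (by fun_prop) measurable_snd]
  exact ((hγ t i).snd.comp (measurePreserving_coord_coordinatewiseTransport hρ hγ t i)).map_eq

/- Given the first path, the law of the past of the second one depends only on the past of the
first, so conditioning reduces the claim to the martingale property of `ρ`. -/
lemma integral_comp_past_mul_increment_coordinatewiseTransport [IsFiniteMeasure ρ]
    (hmart : IsMartingaleMeasure ρ) (hρ : ∀ s i, Integrable (fun x : Path T d => x s i) ρ) {t : ℕ}
    (ht : t + 1 < T) (i : Fin d) {h : ({s : Fin T // (s : ℕ) ≤ t} → Fin d → ℝ) → ℝ}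
    (hh : Measurable h) (hb : ∀ z, |h z| ≤ 1) :
    ∫ p, h (past T d t p.2) * increment ht i p.1 ∂(coordinatewiseTransport ρ γ) = 0 := by
  set κ : ∀ _ : Fin T, Kernel (Fin d → ℝ) (Fin d → ℝ) :=
    fun t => piKernel fun i => (γ t i).condKernel
  have hint : Integrable (fun p => h (past T d t p.2) * increment ht i p.1) (ρ ⊗ₘ piKernel κ) :=
    integrable_comp_mul_of_abs_le_one ((continuous_past t).measurable.comp measurable_snd)
      (measurePreserving_fst_coordinatewiseTransport.integrable_comp_of_integrable
        (integrable_increment hρ ht i)) hh hb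
  have hpast : ∀ x, ∫ y, h (past T d t y) ∂(piKernel κ x) =
      ∫ z, h z ∂(piKernel (fun s : {s : Fin T // (s : ℕ) ≤ t} => κ s) (past T d t x)) := fun x =>
    integral_comp_of_measurePreserving (measurePreserving_subtypeRestrict_piKernel κ _ x)
      hh.aestronglyMeasurable
  rw [coordinatewiseTransport, Measure.integral_compProd hint]
  simp only [integral_mul_const, hpast]
  refine hmart.integral_comp_past_mul_increment hρ ht i
    hh.stronglyMeasurable.integral_kernel.measurable fun z => ?_
  simpa using norm_integral_le_of_norm_le (f := h) (integrable_const (1 : ℝ))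
    (ae_of_all (piKernel (fun s : {s : Fin T // (s : ℕ) ≤ t} => κ s) z) hb)

end

lemma abs_increment_sub_increment_le {t : ℕ} (ht : t + 1 < T) (i : Fin d) (x y : Path T d) :
    |increment ht i y - increment ht i x| ≤ |x ⟨t + 1, ht⟩ i - y ⟨t + 1, ht⟩ i| +
      |x ⟨t, Nat.lt_of_succ_lt ht⟩ i - y ⟨t, Nat.lt_of_succ_lt ht⟩ i| := by
  rw [abs_sub_comm, increment, increment, sub_sub_sub_comm]
  exact abs_sub _ _

lemma integral_comp_mul_increment_le_of_isCoupling {ρ' : Measure (Path T d)}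
    {Γ : Measure (Path T d × Path T d)} [IsFiniteMeasure Γ] (hΓ : IsCoupling Γ ρ ρ')
    (hρ : ∀ s i, Integrable (fun x : Path T d => x s i) ρ)
    (hρ' : ∀ s i, Integrable (fun x : Path T d => x s i) ρ') {t : ℕ} (ht : t + 1 < T) (i : Fin d)
    {g : Path T d → ℝ} (hg : Measurable g) (hb : ∀ x, |g x| ≤ 1)
    (hzero : ∫ p, g p.2 * increment ht i p.1 ∂Γ = 0) :
    ∫ y, g y * increment ht i y ∂ρ' ≤ ∫ p, |p.1 ⟨t + 1, ht⟩ i - p.2 ⟨t + 1, ht⟩ i| ∂Γ +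
      ∫ p, |p.1 ⟨t, Nat.lt_of_succ_lt ht⟩ i - p.2 ⟨t, Nat.lt_of_succ_lt ht⟩ i| ∂Γ := by
  have hfst : Integrable (fun p => increment ht i p.1) Γ :=
    hΓ.fst.integrable_comp_of_integrable (integrable_increment hρ ht i)
  have hsnd : Integrable (fun p => increment ht i p.2) Γ :=
    hΓ.snd.integrable_comp_of_integrable (integrable_increment hρ' ht i)
  have hdist : ∀ s, Integrable (fun p => |p.1 s i - p.2 s i|) Γ := fun s =>
    ((hΓ.fst.integrable_comp_of_integrable (hρ s i)).sub
      (hΓ.snd.integrable_comp_of_integrable (hρ' s i))).abs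
  have hmul : ∀ {Y : Path T d × Path T d → ℝ}, Integrable Y Γ →
      Integrable (fun p => g p.2 * Y p) Γ := fun hY =>
    integrable_comp_mul_of_abs_le_one measurable_snd hY hg hb
  calc ∫ y, g y * increment ht i y ∂ρ' = ∫ p, g p.2 * increment ht i p.2 ∂Γ :=
        (integral_comp_of_measurePreserving hΓ.snd (hg.mul
          (continuous_increment ht i).measurable).aestronglyMeasurable).symm
    _ = ∫ p, (g p.2 * increment ht i p.2 - g p.2 * increment ht i p.1) ∂Γ := by
        rw [integral_sub (hmul hsnd) (hmul hfst), hzero, sub_zero]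
    _ ≤ ∫ p, (|p.1 ⟨t + 1, ht⟩ i - p.2 ⟨t + 1, ht⟩ i| +
          |p.1 ⟨t, Nat.lt_of_succ_lt ht⟩ i - p.2 ⟨t, Nat.lt_of_succ_lt ht⟩ i|) ∂Γ := by
        refine integral_mono ((hmul hsnd).sub (hmul hfst)) ((hdist _).add (hdist _)) fun p => ?_
        simp only [← mul_sub]
        refine (le_abs_self _).trans ((abs_mul _ _).trans_le ?_)
        exact (mul_le_of_le_one_left (abs_nonneg _) (hb _)).trans
          (abs_increment_sub_increment_le ht i p.1 p.2)
    _ = _ := integral_add (hdist _) (hdist _)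

lemma map_snd_coordinatewiseTransport_mem_martSetEps [∀ t i, IsProbabilityMeasure (γ t i)]
    (hρ : ρ ∈ MartSet μ) (hγ : ∀ t i, IsCoupling (γ t i) (μ t i) (ν t i))
    (hμ : ∀ t i, Integrable (fun y => y) (μ t i)) (hν : ∀ t i, Integrable (fun y => y) (ν t i))
    {ε : ℝ} (hε : ∀ t, 2 * ∑ i, ∫ q, |q.1 - q.2| ∂(γ t i) ≤ ε) :
    (coordinatewiseTransport ρ γ).map Prod.snd ∈ MartSetEps ν ε := by
  obtain ⟨hρp, hρμ, hmart⟩ := hρ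
  set Γ := coordinatewiseTransport ρ γ
  have hΓ : IsCoupling Γ ρ (Γ.map Prod.snd) :=
    ⟨measurePreserving_fst_coordinatewiseTransport, measurable_snd.measurePreserving Γ⟩
  have hΓp : IsProbabilityMeasure Γ := isProbabilityMeasure_of_measurePreserving hΓ.fst
  have hΓν : HasMarginals (Γ.map Prod.snd) ν := hasMarginals_map_snd_coordinatewiseTransport hρμ hγ
  have hΓsp : IsProbabilityMeasure (Γ.map Prod.snd) :=
    Measure.isProbabilityMeasure_map measurable_snd.aemeasurable
  refine ⟨hΓsp, hΓν, fun t ht => ?_⟩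
  refine (integral_sum_abs_condNext_sub_le_iff (hΓν.integrable hν) ht).2 fun h hh hb => ?_
  have hle : ∀ i, ∫ y, h i (past T d t y) * increment ht i y ∂(Γ.map Prod.snd) ≤
      ∫ q, |q.1 - q.2| ∂(γ ⟨t + 1, ht⟩ i) +
        ∫ q, |q.1 - q.2| ∂(γ ⟨t, Nat.lt_of_succ_lt ht⟩ i) := fun i => by
    simp only [← integral_abs_sub_coordinatewiseTransport hρμ hγ]
    exact integral_comp_mul_increment_le_of_isCoupling hΓ (hρμ.integrable hμ) (hΓν.integrable hν)
      ht i (((hh i).comp (continuous_past t)).measurable) (fun x => hb i _)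
      (integral_comp_past_mul_increment_coordinatewiseTransport hmart (hρμ.integrable hμ) ht i
        (hh i).measurable (hb i))
  refine (Finset.sum_le_sum fun i _ => hle i).trans ?_
  rw [Finset.sum_add_distrib]
  linarith [hε ⟨t + 1, ht⟩, hε ⟨t, Nat.lt_of_succ_lt ht⟩]

theorem exists_isCoupling_mem_martSetEps (hρ : ρ ∈ MartSet μ)
    (hμp : ∀ t i, IsProbabilityMeasure (μ t i)) (hμ : ∀ t i, Integrable (fun y => y) (μ t i))
    (hνp : ∀ t i, IsProbabilityMeasure (ν t i)) (hν : ∀ t i, Integrable (fun y => y) (ν t i))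
    {ε : ℝ} (hε : ∀ t, 2 * ∑ i, W1R (ν t i) (μ t i) ≤ ε) :
    ∃ ρ' ∈ MartSetEps ν ε, ∃ Γ, IsCoupling Γ ρ ρ' ∧
      ∀ t i, ∫ p, |p.1 t i - p.2 t i| ∂Γ = W1R (ν t i) (μ t i) := by
  choose γ hγ hγW using fun t i => exists_isCoupling_integral_abs_sub_eq_W1R (hν t i) (hμ t i)
  have hswap : ∀ t i, IsCoupling ((γ t i).map Prod.swap) (μ t i) (ν t i) := fun t i => (hγ t i).swap
  have : ∀ t i, IsProbabilityMeasure ((γ t i).map Prod.swap) := fun t i =>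
    isProbabilityMeasure_of_measurePreserving (hswap t i).fst
  have hcost : ∀ t i, ∫ q, |q.1 - q.2| ∂((γ t i).map Prod.swap) = W1R (ν t i) (μ t i) := by
    intro t i
    rw [← hγW, integral_map (by fun_prop) (by fun_prop)]
    simp only [Prod.fst_swap, Prod.snd_swap, abs_sub_comm]
  have hρp : IsProbabilityMeasure ρ := hρ.1
  exact ⟨_, map_snd_coordinatewiseTransport_mem_martSetEps hρ hswap hμ hν (by simpa only [hcost]),
    coordinatewiseTransport ρ fun t i => (γ t i).map Prod.swap,
    ⟨measurePreserving_fst_coordinatewiseTransport, measurable_snd.measurePreserving _⟩,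
    fun t i => (integral_abs_sub_coordinatewiseTransport hρ.2.1 hswap t i).trans (hcost t i)⟩

end Transport

section PathSpace

variable {T d : ℕ}

/-- The `ℓ¹`-norm on path space. -/
def l1Norm (x : Path T d) : ℝ := ∑ t, ∑ i, |x t i|

lemma continuous_l1Norm : Continuous (l1Norm : Path T d → ℝ) := by
  unfold l1Norm
  fun_prop

lemma l1Norm_nonneg (x : Path T d) : 0 ≤ l1Norm x :=
  Finset.sum_nonneg fun _ _ => Finset.sum_nonneg fun _ _ => abs_nonneg _

lemma abs_coord_le_l1Norm (x : Path T d) (t : Fin T) (i : Fin d) : |x t i| ≤ l1Norm x :=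
  (Finset.single_le_sum (f := fun i => |x t i|) (fun _ _ => abs_nonneg _) (Finset.mem_univ i)).trans
    (Finset.single_le_sum (f := fun t => ∑ i, |x t i|)
      (fun _ _ => Finset.sum_nonneg fun _ _ => abs_nonneg _) (Finset.mem_univ t))

lemma norm_le_l1Norm (x : Path T d) : ‖x‖ ≤ l1Norm x :=
  (pi_norm_le_iff_of_nonneg (l1Norm_nonneg x)).2 fun t =>
    (pi_norm_le_iff_of_nonneg (l1Norm_nonneg x)).2 fun i => abs_coord_le_l1Norm x t i

/-- Functions on path space growing at most linearly: for continuous costs in this class, weak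
convergence together with `W₁`-convergence of the marginals gives convergence of the integrals. -/
def HasLinearGrowth (f : Path T d → ℝ) : Prop :=
  ∃ C, ∀ x, |f x| ≤ C * (1 + l1Norm x)

lemma HasLinearGrowth.neg {f : Path T d → ℝ} (hf : HasLinearGrowth f) :
    HasLinearGrowth fun x => -f x :=
  hf.imp fun _ hC x => (abs_neg (f x)).trans_le (hC x)

lemma hasLinearGrowth_mul_increment {g : Path T d → ℝ} (hg : ∀ x, |g x| ≤ 1) {t : ℕ}
    (ht : t + 1 < T) (i : Fin d) : HasLinearGrowth fun x => g x * increment ht i x := by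
  refine ⟨2, fun x => ?_⟩
  calc |g x * increment ht i x| ≤ |increment ht i x| :=
        (abs_mul _ _).trans_le (mul_le_of_le_one_left (abs_nonneg _) (hg x))
    _ ≤ |x ⟨t + 1, ht⟩ i| + |x ⟨t, Nat.lt_of_succ_lt ht⟩ i| := abs_sub _ _
    _ ≤ 2 * (1 + l1Norm x) := by
        linarith [abs_coord_le_l1Norm x ⟨t + 1, ht⟩ i,
          abs_coord_le_l1Norm x ⟨t, Nat.lt_of_succ_lt ht⟩ i]

lemma LipschitzCost.continuous {L : ℝ} {c : Path T d → ℝ} (hc : LipschitzCost L c) :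
    Continuous c := by
  refine continuous_iff_continuousAt.2 fun x => tendsto_iff_dist_tendsto_zero.2 ?_
  have hbound : Continuous fun y : Path T d => L * ∑ t, ∑ i, |y t i - x t i| := by fun_prop
  exact squeeze_zero (fun y => dist_nonneg) (fun y => hc y x) (by simpa using hbound.tendsto x)

lemma LipschitzCost.hasLinearGrowth {L : ℝ} {c : Path T d → ℝ} (hc : LipschitzCost L c) :
    HasLinearGrowth c := by
  refine ⟨|c 0| + |L|, fun x => ?_⟩
  have hx : |c x - c 0| ≤ L * l1Norm x := by simpa [l1Norm] using hc x 0
  have hL := mul_le_mul_of_nonneg_right (le_abs_self L) (l1Norm_nonneg x)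
  have h0 := mul_nonneg (abs_nonneg (c 0)) (l1Norm_nonneg x)
  linarith [abs_sub_abs_le_abs_sub (c x) (c 0), abs_nonneg L]

lemma integrable_l1Norm_comp {Ω : Type*} [MeasurableSpace Ω] {Q : Measure Ω} {Y : Ω → Path T d}
    (hY : ∀ t i, Integrable (fun ω => Y ω t i) Q) : Integrable (fun ω => l1Norm (Y ω)) Q :=
  integrable_finsetSum _ fun t _ => integrable_finsetSum _ fun i _ => (hY t i).abs

lemma integral_l1Norm_comp {Ω : Type*} [MeasurableSpace Ω] {Q : Measure Ω} {Y : Ω → Path T d}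
    (hY : ∀ t i, Integrable (fun ω => Y ω t i) Q) :
    ∫ ω, l1Norm (Y ω) ∂Q = ∑ t, ∑ i, ∫ ω, |Y ω t i| ∂Q := by
  simp only [l1Norm]
  rw [integral_finsetSum _ fun t _ => integrable_finsetSum _ fun i _ => (hY t i).abs]
  exact Finset.sum_congr rfl fun t _ => integral_finsetSum _ fun i _ => (hY t i).abs

variable {π : Measure (Path T d)} {μ : Fin T → Fin d → Measure ℝ}

lemma HasMarginals.integrable_l1Norm (hπ : HasMarginals π μ)
    (hμ : ∀ t i, Integrable (fun y => y) (μ t i)) : Integrable l1Norm π :=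
  integrable_l1Norm_comp (hπ.integrable hμ)

lemma HasMarginals.integral_l1Norm (hπ : HasMarginals π μ)
    (hμ : ∀ t i, Integrable (fun y => y) (μ t i)) :
    ∫ x, l1Norm x ∂π = ∑ t, ∑ i, ∫ y, |y| ∂(μ t i) :=
  (integral_l1Norm_comp (hπ.integrable hμ)).trans <|
    Finset.sum_congr rfl fun t _ => Finset.sum_congr rfl fun i _ =>
      integral_comp_of_measurePreserving (hπ.measurePreserving t i) (hμ t i).abs.1

variable [IsProbabilityMeasure π]

lemma HasMarginals.integrable_weight (hπ : HasMarginals π μ)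
    (hμ : ∀ t i, Integrable (fun y => y) (μ t i)) (C : ℝ) :
    Integrable (fun x => C * (1 + l1Norm x)) π :=
  ((integrable_const 1).add (hπ.integrable_l1Norm hμ)).const_mul C

lemma HasMarginals.integral_weight (hπ : HasMarginals π μ)
    (hμ : ∀ t i, Integrable (fun y => y) (μ t i)) (C : ℝ) :
    ∫ x, C * (1 + l1Norm x) ∂π = C * (1 + ∑ t, ∑ i, ∫ y, |y| ∂(μ t i)) := by
  rw [integral_const_mul, integral_add (integrable_const 1) (hπ.integrable_l1Norm hμ),
    hπ.integral_l1Norm hμ, integral_const, probReal_univ, one_smul]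

lemma HasLinearGrowth.integrable {f : Path T d → ℝ} (hf : HasLinearGrowth f) (hfc : Continuous f)
    (hπ : HasMarginals π μ) (hμ : ∀ t i, Integrable (fun y => y) (μ t i)) : Integrable f π := by
  obtain ⟨C, hC⟩ := hf
  exact (hπ.integrable_weight hμ C).mono' hfc.measurable.aestronglyMeasurable (ae_of_all _ hC)

end PathSpace

section Stability

variable {T d : ℕ} {νs : ℕ → Fin T → Fin d → Measure ℝ} {μ : Fin T → Fin d → Measure ℝ}
  {Ps : ℕ → ProbabilityMeasure (Path T d)} {P : ProbabilityMeasure (Path T d)}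

lemma W1Tendsto.tendsto_sum_integral_abs (h : W1Tendsto νs μ) :
    Tendsto (fun n => ∑ t, ∑ i, ∫ y, |y| ∂(νs n t i)) atTop
      (nhds (∑ t, ∑ i, ∫ y, |y| ∂(μ t i))) :=
  tendsto_finsetSum _ fun t _ => tendsto_finsetSum _ fun i _ =>
    have := h.isProbabilityMeasure_lim t i
    have := fun n => h.isProbabilityMeasure_seq n t i
    tendsto_integral_of_tendsto_W1R (fun n => h.integrable_seq n t i) (h.integrable_lim t i)
      (h.tendsto_W1R t i) lipschitzWith_one_norm

lemma tendsto_integral_of_hasLinearGrowth (h : W1Tendsto νs μ)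
    (hPs : ∀ n, HasMarginals (Ps n : Measure (Path T d)) (νs n))
    (hP : HasMarginals (P : Measure (Path T d)) μ) (hlim : Tendsto Ps atTop (nhds P))
    {f : Path T d → ℝ} (hfc : Continuous f) (hf : HasLinearGrowth f) :
    Tendsto (fun n => ∫ x, f x ∂(Ps n : Measure (Path T d))) atTop
      (nhds (∫ x, f x ∂(P : Measure (Path T d)))) := by
  obtain ⟨C, hC⟩ := hf
  refine tendsto_integral_of_abs_le (ProbabilityMeasure.tendsto_iff_forall_integral_tendsto.1 hlim)
    hfc (w := fun x => C * (1 + l1Norm x)) ((continuous_l1Norm.const_add 1).const_mul C) hC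
    (fun n => (hPs n).integrable_weight (h.integrable_seq n) C)
    (hP.integrable_weight h.integrable_lim C) ?_
  rw [hP.integral_weight h.integrable_lim]
  exact ((h.tendsto_sum_integral_abs.const_add 1).const_mul C).congr fun n =>
    ((hPs n).integral_weight (h.integrable_seq n) C).symm

lemma hasMarginals_of_tendsto (h : W1Tendsto νs μ)
    (hPs : ∀ n, HasMarginals (Ps n : Measure (Path T d)) (νs n))
    (hlim : Tendsto Ps atTop (nhds P)) : HasMarginals (P : Measure (Path T d)) μ := fun t i =>
  (measurePreserving_of_tendsto (f := fun x : Path T d => x t i)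
    (νs := fun n => ⟨νs n t i, h.isProbabilityMeasure_seq n t i⟩)
    (ν := ⟨μ t i, h.isProbabilityMeasure_lim t i⟩) (by fun_prop) hlim
    (tendsto_probabilityMeasure_of_tendsto_W1R (fun n => h.integrable_seq n t i)
      (h.integrable_lim t i) (h.tendsto_W1R t i)) fun n => (hPs n).measurePreserving t i).map_eq

/- Conditional expectations are not weakly continuous, but the functions `h (past x) * increment x`
testing the defect are continuous of linear growth, so each test inequality passes to the limit. -/
theorem mem_martSetEps_of_tendsto (h : W1Tendsto νs μ) {ε : ℕ → ℝ} {ε₀ : ℝ}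
    (hε : Tendsto ε atTop (nhds ε₀))
    (hPs : ∀ n, (Ps n : Measure (Path T d)) ∈ MartSetEps (νs n) (ε n))
    (hlim : Tendsto Ps atTop (nhds P)) : (P : Measure (Path T d)) ∈ MartSetEps μ ε₀ := by
  have hP := hasMarginals_of_tendsto h (fun n => (hPs n).2.1) hlim
  refine ⟨inferInstance, hP, fun t ht => ?_⟩
  refine (integral_sum_abs_condNext_sub_le_iff (hP.integrable h.integrable_lim) ht).2
    fun g hg hb => ?_
  have hconv : Tendsto (fun n => ∑ i, ∫ x, g i (past T d t x) * increment ht i x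
      ∂(Ps n : Measure (Path T d))) atTop
      (nhds (∑ i, ∫ x, g i (past T d t x) * increment ht i x ∂(P : Measure (Path T d)))) :=
    tendsto_finsetSum _ fun i _ =>
      tendsto_integral_of_hasLinearGrowth h (fun n => (hPs n).2.1) hP hlim
        (((hg i).comp (continuous_past t)).mul (continuous_increment ht i))
        (hasLinearGrowth_mul_increment (fun x => hb i _) ht i)
  refine le_of_tendsto_of_tendsto' hconv hε fun n => ?_
  exact (integral_sum_abs_condNext_sub_le_iff
    ((hPs n).2.1.integrable (h.integrable_seq n)) ht).1 ((hPs n).2.2 t ht) g hg hb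

lemma isTightMeasureSet_range_of_hasMarginals (h : W1Tendsto νs μ)
    (hPs : ∀ n, HasMarginals (Ps n : Measure (Path T d)) (νs n)) :
    IsTightMeasureSet (Set.range fun n => (Ps n : Measure (Path T d))) := by
  obtain ⟨C, hC⟩ := h.tendsto_sum_integral_abs.bddAbove_range
  refine isTightMeasureSet_of_lintegral_enorm_le (C := ENNReal.ofReal C) ENNReal.ofReal_ne_top
    (Set.forall_mem_range.2 fun n => ?_)
  calc ∫⁻ x, ‖x‖ₑ ∂(Ps n : Measure (Path T d))
      ≤ ∫⁻ x, ENNReal.ofReal (l1Norm x) ∂(Ps n : Measure (Path T d)) :=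
        lintegral_mono fun x => by
          rw [← ofReal_norm]
          exact ENNReal.ofReal_le_ofReal (norm_le_l1Norm x)
    _ = ENNReal.ofReal (∑ t, ∑ i, ∫ y, |y| ∂(νs n t i)) := by
        rw [← (hPs n).integral_l1Norm (h.integrable_seq n), ofReal_integral_eq_lintegral_ofReal
          ((hPs n).integrable_l1Norm (h.integrable_seq n)) (ae_of_all _ l1Norm_nonneg)]
    _ ≤ ENNReal.ofReal C := ENNReal.ofReal_le_ofReal (hC ⟨n, rfl⟩)

lemma abs_integral_sub_integral_le_of_isCoupling {ρ ρ' : Measure (Path T d)}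
    {Γ : Measure (Path T d × Path T d)} [IsFiniteMeasure ρ] [IsFiniteMeasure ρ']
    (hΓ : IsCoupling Γ ρ ρ') (hρ : ∀ t i, Integrable (fun x : Path T d => x t i) ρ)
    (hρ' : ∀ t i, Integrable (fun x : Path T d => x t i) ρ') {f : Path T d → ℝ} {K : NNReal}
    (hf : LipschitzWith K f) :
    |∫ x, f x ∂ρ - ∫ x, f x ∂ρ'| ≤ K * ∑ t, ∑ i, ∫ p, |p.1 t i - p.2 t i| ∂Γ := by
  have hid : ∀ {σ : Measure (Path T d)}, (∀ t i, Integrable (fun x : Path T d => x t i) σ) →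
      Integrable (fun x => x) σ := fun hσ => Integrable.of_eval fun t => Integrable.of_eval (hσ t)
  have hdiff : ∀ t i, Integrable (fun p => (p.1 - p.2) t i) Γ := fun t i =>
    (hΓ.fst.integrable_comp_of_integrable (hρ t i)).sub
      (hΓ.snd.integrable_comp_of_integrable (hρ' t i))
  calc |∫ x, f x ∂ρ - ∫ x, f x ∂ρ'| ≤ K * ∫ p, ‖p.1 - p.2‖ ∂Γ :=
        hΓ.abs_integral_sub_integral_le (hid hρ) (hid hρ') hf
    _ ≤ K * ∫ p, l1Norm (p.1 - p.2) ∂Γ :=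
        mul_le_mul_of_nonneg_left (integral_mono_of_nonneg (ae_of_all _ fun _ => norm_nonneg _)
          (integrable_l1Norm_comp hdiff) (ae_of_all _ fun _ => norm_le_l1Norm _)) K.coe_nonneg
    _ = K * ∑ t, ∑ i, ∫ p, |p.1 t i - p.2 t i| ∂Γ := by
        rw [integral_l1Norm_comp hdiff]
        rfl

theorem exists_seq_mem_martSetEps_tendsto (h : W1Tendsto νs μ) {ε : ℕ → ℝ}
    (hε : ∀ n t, 2 * ∑ i, W1R (νs n t i) (μ t i) ≤ ε n)
    (hP : (P : Measure (Path T d)) ∈ MartSet μ) :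
    ∃ Qs : ℕ → ProbabilityMeasure (Path T d),
      (∀ n, (Qs n : Measure (Path T d)) ∈ MartSetEps (νs n) (ε n)) ∧
        Tendsto Qs atTop (nhds P) := by
  choose ρ hρ Γ hΓ hcost using fun n => exists_isCoupling_mem_martSetEps hP
    h.isProbabilityMeasure_lim h.integrable_lim (h.isProbabilityMeasure_seq n) (h.integrable_seq n)
    (hε n)
  have hprob : ∀ n, IsProbabilityMeasure (ρ n) := fun n => (hρ n).1
  refine ⟨fun n => ⟨ρ n, hprob n⟩, hρ, ?_⟩
  refine tendsto_iff_forall_lipschitz_integral_tendsto.2 fun f _ ⟨K, hf⟩ => ?_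
  rw [tendsto_iff_dist_tendsto_zero]
  have hW : Tendsto (fun n => (K : ℝ) * ∑ t, ∑ i, W1R (νs n t i) (μ t i)) atTop (nhds 0) := by
    simpa using (tendsto_finsetSum Finset.univ fun t _ =>
      tendsto_finsetSum Finset.univ fun i _ => h.tendsto_W1R t i).const_mul (K : ℝ)
  refine squeeze_zero (fun n => dist_nonneg) (fun n => ?_) hW
  rw [dist_comm]
  simp only [← hcost]
  exact abs_integral_sub_integral_le_of_isCoupling (hΓ n) (hP.2.1.integrable h.integrable_lim)
    ((hρ n).2.1.integrable (h.integrable_seq n)) hf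

end Stability

section Optimizers

variable {T d : ℕ}

/-- `π` is an optimizer of the problem of maximizing `∫ c dπ` over `π ∈ S`. -/
def IsMaximizer (c : Path T d → ℝ) (S : Set (Measure (Path T d))) (π : Measure (Path T d)) :
    Prop :=
  π ∈ S ∧ Integrable c π ∧ ∫ x, c x ∂π = sSup (primalVals c S)

/-- `π` is an optimizer of the problem of minimizing `∫ c dπ` over `π ∈ S`. -/
def IsMinimizer (c : Path T d → ℝ) (S : Set (Measure (Path T d))) (π : Measure (Path T d)) :
    Prop :=
  π ∈ S ∧ Integrable c π ∧ ∫ x, c x ∂π = sInf (primalVals c S)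

section OrderReversal

variable (c : Path T d → ℝ) (S : Set (Measure (Path T d)))

lemma primalVals_neg : primalVals (fun x => -c x) S = -primalVals c S := by
  ext r
  simp only [primalVals, Set.mem_neg, Set.mem_ofPred_eq, integrable_fun_neg_iff, integral_neg,
    neg_eq_iff_eq_neg]

lemma isMaximizer_neg_iff (π : Measure (Path T d)) :
    IsMaximizer (fun x => -c x) S π ↔ IsMinimizer c S π := by
  simp only [IsMaximizer, IsMinimizer, primalVals_neg, Real.sSup_neg, integrable_fun_neg_iff,
    integral_neg, neg_inj]

end OrderReversal

section Criteria

variable {c : Path T d → ℝ} {S : Set (Measure (Path T d))} {π ρ : Measure (Path T d)}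

lemma isMaximizer_of_forall_integral_le (hπ : π ∈ S) (hcπ : Integrable c π)
    (hle : ∀ ρ ∈ S, ∫ x, c x ∂ρ ≤ ∫ x, c x ∂π) : IsMaximizer c S π := by
  have hgreatest : IsGreatest (primalVals c S) (∫ x, c x ∂π) :=
    ⟨⟨π, hπ, hcπ, rfl⟩, by rintro _ ⟨ρ, hρ, -, rfl⟩; exact hle ρ hρ⟩
  exact ⟨hπ, hcπ, hgreatest.csSup_eq.symm⟩

lemma IsMaximizer.integral_le (hπ : IsMaximizer c S π) (hbdd : BddAbove (primalVals c S))
    (hρ : ρ ∈ S) (hcρ : Integrable c ρ) : ∫ x, c x ∂ρ ≤ ∫ x, c x ∂π :=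
  (le_csSup hbdd ⟨ρ, hρ, hcρ, rfl⟩).trans_eq hπ.2.2.symm

lemma bddAbove_primalVals_martSetEps {μ : Fin T → Fin d → Measure ℝ}
    (hμ : ∀ t i, Integrable (fun y => y) (μ t i)) (hc : HasLinearGrowth c) (ε : ℝ) :
    BddAbove (primalVals c (MartSetEps μ ε)) := by
  obtain ⟨C, hC⟩ := hc
  refine ⟨C * (1 + ∑ t, ∑ i, ∫ y, |y| ∂(μ t i)), ?_⟩
  rintro _ ⟨π, ⟨hπ, hmarg, -⟩, hcπ, rfl⟩
  rw [← hmarg.integral_weight hμ C]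
  exact integral_mono hcπ (hmarg.integrable_weight hμ C) fun x => (le_abs_self _).trans (hC x)

end Criteria

variable {c : Path T d → ℝ} {μ : Fin T → Fin d → Measure ℝ}

theorem exists_isMaximizer_martSetEps (hcont : Continuous c) (hgrowth : HasLinearGrowth c)
    (hprob : ∀ t i, IsProbabilityMeasure (μ t i))
    (hmom : ∀ t i, Integrable (fun y => y) (μ t i)) {ε : ℝ} (hne : (MartSetEps μ ε).Nonempty) :
    ∃ π, IsMaximizer c (MartSetEps μ ε) π := by
  have hconst := W1Tendsto.const hprob hmom
  have integrable_c : ∀ π ∈ MartSetEps μ ε, Integrable c π := fun π hπ =>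
    have := hπ.1
    hgrowth.integrable hcont hπ.2.1 hmom
  obtain ⟨ρ, hρ⟩ := hne
  obtain ⟨u, -, hu, hmem⟩ := exists_seq_tendsto_sSup
    (S := primalVals c (MartSetEps μ ε)) ⟨_, ρ, hρ, integrable_c ρ hρ, rfl⟩
    (bddAbove_primalVals_martSetEps hmom hgrowth ε)
  choose πs hπs _ hπsu using hmem
  let Ps : ℕ → ProbabilityMeasure (Path T d) := fun n => ⟨πs n, (hπs n).1⟩
  obtain ⟨P, φ, hφ, hP⟩ := exists_subseq_tendsto_of_isTightMeasureSet (μs := Ps)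
    (isTightMeasureSet_range_of_hasMarginals hconst fun n => (hπs n).2.1)
  have hPmem : (P : Measure (Path T d)) ∈ MartSetEps μ ε :=
    mem_martSetEps_of_tendsto hconst tendsto_const_nhds (Ps := Ps ∘ φ) (fun n => hπs (φ n)) hP
  have hlim := tendsto_integral_of_hasLinearGrowth hconst (Ps := Ps ∘ φ)
    (fun n => (hπs (φ n)).2.1) hPmem.2.1 hP hcont hgrowth
  refine ⟨P, hPmem, integrable_c _ hPmem, tendsto_nhds_unique hlim ?_⟩
  exact (hu.comp hφ.tendsto_atTop).congr fun n => hπsu (φ n)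

theorem isMaximizer_martSet_of_tendsto (hcont : Continuous c) (hgrowth : HasLinearGrowth c)
    {νs : ℕ → Fin T → Fin d → Measure ℝ}
    (h : W1Tendsto νs μ) {ε : ℕ → ℝ} (hε : Tendsto ε atTop (nhds 0))
    (hbound : ∀ n t, 2 * ∑ i, W1R (νs n t i) (μ t i) ≤ ε n)
    {Ps : ℕ → ProbabilityMeasure (Path T d)} {P : ProbabilityMeasure (Path T d)}
    (hPs : ∀ n, IsMaximizer c (MartSetEps (νs n) (ε n)) (Ps n)) (hlim : Tendsto Ps atTop (nhds P)) :
    IsMaximizer c (MartSet μ) P := by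
  have hP : (P : Measure (Path T d)) ∈ MartSet μ := martSetEps_zero_subset h.integrable_lim
    (mem_martSetEps_of_tendsto h hε (fun n => (hPs n).1) hlim)
  refine isMaximizer_of_forall_integral_le hP (hgrowth.integrable hcont hP.2.1 h.integrable_lim)
    fun ρ hρ => ?_
  obtain ⟨R, rfl⟩ : ∃ R : ProbabilityMeasure (Path T d), R = ρ := ⟨⟨ρ, hρ.1⟩, rfl⟩
  obtain ⟨Qs, hQs, hQlim⟩ := exists_seq_mem_martSetEps_tendsto h hbound hρ
  have integral_le : ∀ n, ∫ x, c x ∂(Qs n : Measure (Path T d)) ≤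
      ∫ x, c x ∂(Ps n : Measure (Path T d)) := fun n =>
    (hPs n).integral_le (bddAbove_primalVals_martSetEps (h.integrable_seq n) hgrowth _) (hQs n)
      (hgrowth.integrable hcont (hQs n).2.1 (h.integrable_seq n))
  exact le_of_tendsto_of_tendsto'
    (tendsto_integral_of_hasLinearGrowth h (fun n => (hQs n).2.1) hρ.2.1 hQlim hcont hgrowth)
    (tendsto_integral_of_hasLinearGrowth h (fun n => (hPs n).1.2.1) hP.2.1 hlim hcont hgrowth)
    integral_le

end Optimizers

section WeakLimitPoints

variable {T d : ℕ} {Ps : ℕ → ProbabilityMeasure (Path T d)}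

lemma weakTendsto_coe_iff {P : ProbabilityMeasure (Path T d)} :
    WeakTendsto (fun n => (Ps n : Measure (Path T d))) P ↔ Tendsto Ps atTop (nhds P) :=
  ProbabilityMeasure.tendsto_iff_forall_integral_tendsto.symm

lemma WeakTendsto.isProbabilityMeasure {π : Measure (Path T d)}
    (h : WeakTendsto (fun n => (Ps n : Measure (Path T d))) π) : IsProbabilityMeasure π := by
  have hone := h (BoundedContinuousFunction.const _ 1)
  simp only [BoundedContinuousFunction.const_apply, integral_const, probReal_univ, smul_eq_mul,
    mul_one] at hone
  exact ⟨(ENNReal.toReal_eq_one_iff _).1 (tendsto_nhds_unique hone tendsto_const_nhds)⟩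

lemma tight_of_isTightMeasureSet {πs : ℕ → Measure (Path T d)}
    (h : IsTightMeasureSet (Set.range πs)) : Tight πs := fun _ hδ =>
  (isTightMeasureSet_iff_exists_isCompact_measure_compl_le.1 h _ (ENNReal.ofReal_pos.2 hδ)).imp
    fun _ hK => ⟨hK.1, fun n => hK.2 _ ⟨n, rfl⟩⟩

end WeakLimitPoints

section MainTheorem

variable {T d : ℕ} {c : Path T d → ℝ} {νs : ℕ → Fin T → Fin d → Measure ℝ}
  {μ : Fin T → Fin d → Measure ℝ} {ε : ℕ → ℝ}

lemma W1Tendsto.of_two_mul_sum_W1R_le (hprob : ∀ t i, IsProbabilityMeasure (μ t i))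
    (hmom : ∀ t i, Integrable (fun y => y) (μ t i))
    (hprobs : ∀ n t i, IsProbabilityMeasure (νs n t i))
    (hmoms : ∀ n t i, Integrable (fun y => y) (νs n t i)) (hε : Tendsto ε atTop (nhds 0))
    (hbound : ∀ n t, 2 * ∑ i, W1R (νs n t i) (μ t i) ≤ ε n) : W1Tendsto νs μ where
  isProbabilityMeasure_seq := hprobs
  isProbabilityMeasure_lim := hprob
  integrable_seq := hmoms
  integrable_lim := hmom
  tendsto_W1R t i := squeeze_zero (fun n => W1R_nonneg _ _) (fun n => by
    have hle : W1R (νs n t i) (μ t i) ≤ ∑ j, W1R (νs n t j) (μ t j) :=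
      Finset.single_le_sum (f := fun j => W1R (νs n t j) (μ t j)) (fun _ _ => W1R_nonneg _ _)
        (Finset.mem_univ i)
    linarith [hbound n t, W1R_nonneg (νs n t i) (μ t i)]) hε

lemma martSetEps_nonempty (hprob : ∀ t i, IsProbabilityMeasure (μ t i))
    (hmom : ∀ t i, Integrable (fun y => y) (μ t i)) (hne : (MartSet μ).Nonempty)
    {ν : Fin T → Fin d → Measure ℝ} (hprobν : ∀ t i, IsProbabilityMeasure (ν t i))
    (hmomν : ∀ t i, Integrable (fun y => y) (ν t i)) {δ : ℝ}
    (hbound : ∀ t, 2 * ∑ i, W1R (ν t i) (μ t i) ≤ δ) : (MartSetEps ν δ).Nonempty := by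
  obtain ⟨ρ, hρ⟩ := hne
  obtain ⟨ρ', hρ', -⟩ := exists_isCoupling_mem_martSetEps hρ hprob hmom hprobν hmomν hbound
  exact ⟨ρ', hρ'⟩

theorem tight_and_weakLimitPoint_of_isMaximizer (hcont : Continuous c) (hgrowth : HasLinearGrowth c)
    (h : W1Tendsto νs μ) (hε : Tendsto ε atTop (nhds 0))
    (hbound : ∀ n t, 2 * ∑ i, W1R (νs n t i) (μ t i) ≤ ε n) {πs : ℕ → Measure (Path T d)}
    (hπs : ∀ n, IsMaximizer c (MartSetEps (νs n) (ε n)) (πs n)) :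
    Tight πs ∧ (∀ π, WeakLimitPoint πs π → IsMaximizer c (MartSet μ) π) ∧
      ((∃! π, IsMaximizer c (MartSet μ) π) → ∃ π, WeakTendsto πs π) := by
  obtain ⟨Ps, rfl⟩ : ∃ Ps : ℕ → ProbabilityMeasure (Path T d), (fun n => ↑(Ps n)) = πs :=
    ⟨fun n => ⟨πs n, (hπs n).1.1⟩, rfl⟩
  have htight := isTightMeasureSet_range_of_hasMarginals h fun n => (hπs n).1.2.1
  have isMaximizer_lim : ∀ (P : ProbabilityMeasure (Path T d)) (φ : ℕ → ℕ), StrictMono φ →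
      Tendsto (Ps ∘ φ) atTop (nhds P) → IsMaximizer c (MartSet μ) P := fun P φ hφ hP =>
    isMaximizer_martSet_of_tendsto hcont hgrowth (h.comp_strictMono hφ)
      (hε.comp hφ.tendsto_atTop) (fun n => hbound (φ n)) (fun n => hπs (φ n)) hP
  refine ⟨tight_of_isTightMeasureSet htight, ?_, ?_⟩
  · rintro π ⟨φ, hφ, hlim⟩
    have hπ : IsProbabilityMeasure π := WeakTendsto.isProbabilityMeasure (Ps := Ps ∘ φ) hlim
    exact isMaximizer_lim ⟨π, hπ⟩ φ hφ (weakTendsto_coe_iff.1 hlim)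
  · rintro ⟨π, hπ, huniq⟩
    have hprob : IsProbabilityMeasure π := hπ.1.1
    exact ⟨π, weakTendsto_coe_iff (P := ⟨π, hprob⟩).2 <|
      tendsto_of_isTightMeasureSet_of_forall_subseq htight fun Q φ hφ hQ =>
        Subtype.ext (huniq Q (isMaximizer_lim Q φ hφ hQ))⟩

theorem mmot_lp_optimizers_general (hprob : ∀ t i, IsProbabilityMeasure (μ t i))
    (hmom : ∀ t i, Integrable (fun y => y) (μ t i)) (hne : (MartSet μ).Nonempty)
    (hprobs : ∀ n t i, IsProbabilityMeasure (νs n t i))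
    (hmoms : ∀ n t i, Integrable (fun y => y) (νs n t i))
    (hcont : Continuous c) (hgrowth : HasLinearGrowth c) (hε : Tendsto ε atTop (nhds 0))
    (hbound : ∀ n t, 2 * ∑ i, W1R (νs n t i) (μ t i) ≤ ε n) :
    (∀ n, ∃ π, IsMaximizer c (MartSetEps (νs n) (ε n)) π) ∧
    (∀ n, ∃ π, IsMinimizer c (MartSetEps (νs n) (ε n)) π) ∧
    (∀ πs : ℕ → Measure (Path T d), (∀ n, IsMaximizer c (MartSetEps (νs n) (ε n)) (πs n)) →
      Tight πs ∧ (∀ π, WeakLimitPoint πs π → IsMaximizer c (MartSet μ) π) ∧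
        ((∃! π, IsMaximizer c (MartSet μ) π) → ∃ π, WeakTendsto πs π)) ∧
    (∀ πs : ℕ → Measure (Path T d), (∀ n, IsMinimizer c (MartSetEps (νs n) (ε n)) (πs n)) →
      Tight πs ∧ (∀ π, WeakLimitPoint πs π → IsMinimizer c (MartSet μ) π) ∧
        ((∃! π, IsMinimizer c (MartSet μ) π) → ∃ π, WeakTendsto πs π)) := by
  have h := W1Tendsto.of_two_mul_sum_W1R_le hprob hmom hprobs hmoms hε hbound
  have hne_eps := fun n => martSetEps_nonempty hprob hmom hne (hprobs n) (hmoms n) (hbound n)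
  simp only [← isMaximizer_neg_iff]
  exact ⟨fun n => exists_isMaximizer_martSetEps hcont hgrowth (hprobs n) (hmoms n) (hne_eps n),
    fun n => exists_isMaximizer_martSetEps hcont.neg hgrowth.neg (hprobs n) (hmoms n) (hne_eps n),
    fun _ => tight_and_weakLimitPoint_of_isMaximizer hcont hgrowth h hε hbound,
    fun _ => tight_and_weakLimitPoint_of_isMaximizer hcont.neg hgrowth.neg h hε hbound⟩

end MainTheorem

/-- Theorem, part (ii): existence and convergence of optimizers.
Each relaxed problem `P̄_{ε_n}(μ̌ⁿ)` (resp. `P̲_{ε_n}(μ̌ⁿ)`) admits an optimizer `π_n`; any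
sequence of optimizers is tight and every weak limit point is an optimizer of `P̄(μ̌)`
(resp. `P̲(μ̌)`); if the limiting problem has a unique optimizer, the sequence converges
weakly. -/
theorem mmot_lp_optimizers {T d : ℕ} (hT : 0 < T)
    (μ : Fin T → Fin d → Measure ℝ)
    (hprob : ∀ t i, IsProbabilityMeasure (μ t i))
    (hmom : ∀ t i, Integrable (fun y : ℝ => y) (μ t i))
    (hne : (MartSet μ).Nonempty)
    (μn : ℕ → Fin T → Fin d → Measure ℝ)
    (hprobn : ∀ n t i, IsProbabilityMeasure (μn n t i))
    (hmomn : ∀ n t i, Integrable (fun y : ℝ => y) (μn n t i))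
    (r : ℕ → ℝ)
    (hrdef : ∀ n, r n = 2 * Finset.univ.sup' ⟨⟨0, hT⟩, Finset.mem_univ _⟩
      (fun t => ∑ i, W1R (μn n t i) (μ t i)))
    (hr0 : Tendsto r atTop (nhds 0))
    (c : Path T d → ℝ) (L : ℝ) (hc : LipschitzCost L c)
    (ε : ℕ → ℝ) (hε0 : Tendsto ε atTop (nhds 0)) (hεr : ∀ n, r n ≤ ε n) :
    -- existence of optimizers of the relaxed problems
    (∀ n, ∃ π ∈ MartSetEps (μn n) (ε n), Integrable c π ∧
      ∫ x, c x ∂π = PbarEps (μn n) c (ε n)) ∧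
    (∀ n, ∃ π ∈ MartSetEps (μn n) (ε n), Integrable c π ∧
      ∫ x, c x ∂π = PlowEps (μn n) c (ε n)) ∧
    -- any sequence of optimizers of the maximization problems
    (∀ πs : ℕ → Measure (Path T d),
      (∀ n, πs n ∈ MartSetEps (μn n) (ε n) ∧ Integrable c (πs n) ∧
        ∫ x, c x ∂(πs n) = PbarEps (μn n) c (ε n)) →
      Tight πs ∧
      (∀ π, WeakLimitPoint πs π →
        π ∈ MartSet μ ∧ Integrable c π ∧ ∫ x, c x ∂π = Pbar μ c) ∧
      ((∃! π, π ∈ MartSet μ ∧ Integrable c π ∧ ∫ x, c x ∂π = Pbar μ c) →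
        ∃ π, WeakTendsto πs π)) ∧
    -- any sequence of optimizers of the minimization problems
    (∀ πs : ℕ → Measure (Path T d),
      (∀ n, πs n ∈ MartSetEps (μn n) (ε n) ∧ Integrable c (πs n) ∧
        ∫ x, c x ∂(πs n) = PlowEps (μn n) c (ε n)) →
      Tight πs ∧
      (∀ π, WeakLimitPoint πs π →
        π ∈ MartSet μ ∧ Integrable c π ∧ ∫ x, c x ∂π = Plow μ c) ∧
      ((∃! π, π ∈ MartSet μ ∧ Integrable c π ∧ ∫ x, c x ∂π = Plow μ c) →
        ∃ π, WeakTendsto πs π)) := by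
  refine mmot_lp_optimizers_general hprob hmom hne hprobn hmomn hc.continuous hc.hasLinearGrowth hε0
    fun n t => le_trans ?_ ((hrdef n).symm.trans_le (hεr n))
  exact mul_le_mul_of_nonneg_left (Finset.le_sup' (fun t => ∑ i, W1R (μn n t i) (μ t i))
    (Finset.mem_univ t)) zero_le_two

end MMOT
end

section
/- Assume c : 𝒳 → ℝ is continuous and all marginals μ_{t,i} are supported in [−M, M] for some M > 0. Fix a feed-forward neural network architecture with at least one hidden layer whose activation function is continuous, nondecreasing, bounded and nonconstant, and let D̄^m(μ̌) be the infimum of ∫ h dμ₀ (for a fixed μ₀ ∈ ℳ(μ̌)) over all hedging functions h built from networks of hidden dimension m that satisfy h ≥ c on [−M,M]^{T×d}. Then D̄^m(μ̌) → D̄(μ̌) as m → ∞, where D̄(μ̌) is the corresponding infimum over all dual hedging functions with φ_{t,i} ∈ L¹(μ_{t,i}) and h_{t,i} measurable. -/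
open MeasureTheory Filter

namespace MMOT

/-- Combined payoff of static positions `φ` and dynamic strategy `h`. -/
noncomputable def hedgeFn {T d : ℕ} (φ : Fin T → Fin d → ℝ → ℝ)
    (h : ∀ t : ℕ, t + 1 < T → Fin d → Path T d → ℝ) (x : Path T d) : ℝ :=
  (∑ t, ∑ i, φ t i (x t i)) +
    ∑ t : Fin T, ∑ i,
      if ht : (t : ℕ) + 1 < T then h t ht i x * (x ⟨(t : ℕ) + 1, ht⟩ i - x t i) else 0

/-- The cube `[-M, M]^{T×d}`. -/
def cube (T d : ℕ) (M : ℝ) : Set (Path T d) :=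
  {x | ∀ t i, x t i ∈ Set.Icc (-M) M}

noncomputable def hiddenSeq (ψ : ℝ → ℝ) {m : ℕ} (W : ℕ → Fin m → Fin m → ℝ)
    (b : ℕ → Fin m → ℝ) (v : Fin m → ℝ) : ℕ → Fin m → ℝ
  | 0 => v
  | j + 1 => fun i => ψ ((∑ i', W j i i' * hiddenSeq ψ W b v j i') + b j i)

/-- `f` is a feed-forward neural network `ℝ^k → ℝ` with `l` layers, hidden dimension `m`
and activation `ψ`: `f = A_l ∘ ψ ∘ A_{l-1} ∘ ⋯ ∘ ψ ∘ A_0` for affine maps `A_0, …, A_l`. -/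
def IsNeuralNet (ψ : ℝ → ℝ) (l k m : ℕ) (f : (Fin k → ℝ) → ℝ) : Prop :=
  ∃ (W0 : Fin m → Fin k → ℝ) (b0 : Fin m → ℝ) (W : ℕ → Fin m → Fin m → ℝ)
    (b : ℕ → Fin m → ℝ) (Wl : Fin m → ℝ) (bl : ℝ),
    ∀ x, f x = (∑ j, Wl j *
      hiddenSeq ψ W b (fun i => ψ ((∑ i', W0 i i' * x i') + b0 i)) (l - 1) j) + bl

/-- The first `t+1` coordinates of a path, flattened into a vector in `ℝ^{(t+1)d}`. -/
def restrFlatten (T d : ℕ) (t : ℕ) (ht : t + 1 < T) (x : Path T d) :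
    Fin ((t + 1) * d) → ℝ :=
  fun j => x (Fin.castLE ht.le (finProdFinEquiv.symm j).1) (finProdFinEquiv.symm j).2

/-- The statics `φ_{t,i}` and dynamics `h_{t,i}` belong to the neural-network class
`𝔑_{l,1,m}` resp. `𝔑_{l,d·t,m}`. -/
def NNHedge (ψ : ℝ → ℝ) (l m : ℕ) {T d : ℕ} (φ : Fin T → Fin d → ℝ → ℝ)
    (h : ∀ t : ℕ, t + 1 < T → Fin d → Path T d → ℝ) : Prop :=
  (∀ t i, ∃ F, IsNeuralNet ψ l 1 m F ∧ ∀ y, φ t i y = F fun _ => y) ∧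
  (∀ (t : ℕ) (ht : t + 1 < T) (i : Fin d), ∃ F, IsNeuralNet ψ l ((t + 1) * d) m F ∧
    ∀ x, h t ht i x = F (restrFlatten T d t ht x))

/-- The values `∫ h dμ₀` over all superhedges (on the cube) from the full dual class `𝓗`. -/
def dualCubeVals {T d : ℕ} (μ : Fin T → Fin d → Measure ℝ) (μ0 : Measure (Path T d))
    (c : Path T d → ℝ) (M : ℝ) : Set ℝ :=
  {r | ∃ (φ : Fin T → Fin d → ℝ → ℝ) (h : ∀ t : ℕ, t + 1 < T → Fin d → Path T d → ℝ),
    (∀ t i, Integrable (φ t i) (μ t i)) ∧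
    (∀ (t : ℕ) (ht : t + 1 < T) (i : Fin d), Measurable[pastSigma T d t] (h t ht i)) ∧
    (∀ x ∈ cube T d M, c x ≤ hedgeFn φ h x) ∧
    r = ∫ x, hedgeFn φ h x ∂μ0}

/-- The values `∫ h dμ₀` over all superhedges (on the cube) from the neural-network
class `𝓗^m`. -/
def dualCubeNNVals (ψ : ℝ → ℝ) (l m : ℕ) {T d : ℕ} (μ0 : Measure (Path T d))
    (c : Path T d → ℝ) (M : ℝ) : Set ℝ :=
  {r | ∃ (φ : Fin T → Fin d → ℝ → ℝ) (h : ∀ t : ℕ, t + 1 < T → Fin d → Path T d → ℝ),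
    NNHedge ψ l m φ h ∧
    (∀ x ∈ cube T d M, c x ≤ hedgeFn φ h x) ∧
    r = ∫ x, hedgeFn φ h x ∂μ0}

/-!
The networks of all sizes generate a linear space of continuous hedging functions on the compact
cube. By the M. Riesz extension theorem and the Riesz–Markov theorem there is a probability measure
`π` on the cube that agrees with `μ₀` on this space and for which `∫ c dπ` is the infimum of the
neural superhedging values over all sizes. A monotone, bounded, nonconstant activation is
discriminatory in the sense of Cybenko, so networks separate finite measures: agreement on static
network hedges gives `π` the prescribed marginals, and agreement on dynamic ones makes it a
martingale measure. Weak duality then bounds every value of the full dual problem below by `∫ c dπ`.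
There `h_{t,i}` is only measurable, so its gains need not be integrable a priori; as for a local
martingale bounded below, integrability follows by localising and going backwards in time.
-/

theorem tendsto_sInf_of_isGLB_iUnion {α ι : Type*} [ConditionallyCompleteLinearOrder α]
    [TopologicalSpace α] [OrderTopology α] [NoMaxOrder α] [Preorder ι] {S : ι → Set α}
    {A : Set α} {p : α} (hS : Monotone S) (hSA : ∀ i, S i ⊆ A) (hp : p ∈ lowerBounds A)
    (hglb : IsGLB (⋃ i, S i) p) : Tendsto (fun i => sInf (S i)) atTop (nhds (sInf A)) := by
  have hbdd (i : ι) : BddBelow (S i) := ⟨p, lowerBounds_mono_set (hSA i) hp⟩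
  have hlt : ∀ q > p, ∃ i, ∃ r ∈ S i, r < q := fun q hq => by
    obtain ⟨r, hr, hrq⟩ := (isGLB_lt_iff hglb).1 hq
    obtain ⟨i, hi⟩ := Set.mem_iUnion.1 hr
    exact ⟨i, r, hi, hrq⟩
  have hevent : ∀ q > p, ∀ᶠ i in atTop, ∃ r ∈ S i, r < q := fun q hq => by
    obtain ⟨i, r, hr, hrq⟩ := hlt q hq
    filter_upwards [eventually_ge_atTop i] with j hij using ⟨r, hS hij hr, hrq⟩
  obtain ⟨q', hq'⟩ := exists_gt p
  refine tendsto_order.2 ⟨fun q hq => ?_, fun q hq => ?_⟩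
  · filter_upwards [hevent q' hq'] with i ⟨r, hr, _⟩
    exact hq.trans_le (csInf_le_csInf ⟨p, hp⟩ ⟨r, hr⟩ (hSA i))
  · obtain ⟨i, r, hr, -⟩ := hlt q' hq'
    have hpA : p ≤ sInf A := le_csInf ⟨r, hSA i hr⟩ hp
    filter_upwards [hevent q (hpA.trans_lt hq)] with i ⟨r, hr, hrq⟩
    exact (csInf_le (hbdd i) hr).trans_lt hrq

section RieszExtension

variable {E : Type*} [AddCommGroup E] [Module ℝ E] {s : PointedCone ℝ E} {f : E →ₗ.[ℝ] ℝ} {c : E}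

theorem supSpanSingleton_nonneg (hf : ∀ v : f.domain, (v : E) ∈ s → 0 ≤ f v)
    (hc : c ∉ f.domain) {p : ℝ} (hlower : ∀ v : f.domain, c - v ∈ s → f v ≤ p)
    (hupper : ∀ v : f.domain, v - c ∈ s → p ≤ f v) (x : (f.supSpanSingleton c p hc).domain)
    (hx : (x : E) ∈ s) : 0 ≤ f.supSpanSingleton c p hc x := by
  obtain ⟨x, hxdom⟩ := x
  obtain ⟨v, hv, _, ha, rfl⟩ := Submodule.mem_sup.1 hxdom
  obtain ⟨a, rfl⟩ := Submodule.mem_span_singleton.1 ha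
  rw [LinearPMap.supSpanSingleton_apply_mk _ _ _ _ _ hv, RingHom.id_apply, smul_eq_mul]
  set w : f.domain := ⟨v, hv⟩
  have hscale : ∀ r : ℝ, 0 ≤ r → r • (v + a • c) ∈ s := fun r hr => s.smul_mem hr hx
  rcases lt_trichotomy a 0 with ha | rfl | ha
  · have h := hupper ((-a)⁻¹ • w) (by
      convert hscale (-a)⁻¹ (inv_nonneg.2 (neg_nonneg.2 ha.le)) using 1
      simp [w, smul_smul, ha.ne, sub_eq_add_neg])
    rw [f.map_smul, smul_eq_mul, le_inv_mul_iff₀ (neg_pos.2 ha)] at h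
    linarith
  · simpa using hf w (by simpa using hx)
  · have h := hlower (-(a⁻¹ • w)) (by
      convert hscale a⁻¹ (inv_nonneg.2 ha.le) using 1
      simp [w, smul_smul, ha.ne', add_comm])
    rw [f.map_neg, f.map_smul, smul_eq_mul, neg_le, le_inv_mul_iff₀ ha] at h
    linarith

theorem exists_nonneg_extension_isGLB (s : PointedCone ℝ E) (f : E →ₗ.[ℝ] ℝ)
    (nonneg : ∀ v : f.domain, (v : E) ∈ s → 0 ≤ f v)
    (dense : ∀ y, ∃ v : f.domain, (v : E) + y ∈ s) (c : E) :
    ∃ g : E →ₗ[ℝ] ℝ, (∀ v : f.domain, g v = f v) ∧ (∀ x ∈ s, 0 ≤ g x) ∧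
      IsGLB {r | ∃ v : f.domain, (v : E) - c ∈ s ∧ f v = r} (g c) := by
  set A := {r | ∃ v : f.domain, (v : E) - c ∈ s ∧ f v = r}
  suffices h : ∃ f' : E →ₗ.[ℝ] ℝ, f ≤ f' ∧ (∀ v : f'.domain, (v : E) ∈ s → 0 ≤ f' v) ∧
      ∃ hc : c ∈ f'.domain, ∀ b ∈ lowerBounds A, b ≤ f' ⟨c, hc⟩ by
    obtain ⟨f', hle, hnonneg, hc, hglb⟩ := h
    obtain ⟨g, hgf', hg⟩ := riesz_extension s f' hnonneg fun y =>
      (dense y).imp' (Submodule.inclusion hle.1) fun v hv => hv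
    have hgf : ∀ v : f.domain, g v = f v := fun v =>
      (hgf' ⟨v, hle.1 v.2⟩).trans (hle.2 rfl).symm
    refine ⟨g, hgf, hg, ?_, fun b hb => (hglb b hb).trans (hgf' ⟨c, hc⟩).ge⟩
    rintro _ ⟨v, hv, rfl⟩
    simpa [hgf] using hg _ hv
  by_cases hc : c ∈ f.domain
  · exact ⟨f, le_rfl, nonneg, hc, fun b hb => hb ⟨⟨c, hc⟩, by simp, rfl⟩⟩
  have hlower : ∀ w : f.domain, c - w ∈ s → f w ∈ lowerBounds A := by
    rintro w hw _ ⟨v, hv, rfl⟩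
    rw [← sub_nonneg, ← f.map_sub]
    exact nonneg _ (by simpa using s.add_mem hv hw)
  have hne : A.Nonempty := by
    obtain ⟨v, hv⟩ := dense (-c)
    exact ⟨f v, v, by rwa [sub_eq_add_neg], rfl⟩
  have hbdd : BddBelow A := by
    obtain ⟨w, hw⟩ := dense c
    exact ⟨_, hlower (-w) (by simpa [add_comm] using hw)⟩
  refine ⟨f.supSpanSingleton c (sInf A) hc, LinearPMap.left_le_sup _ _ _,
    supSpanSingleton_nonneg nonneg hc (fun w hw => le_csInf hne (hlower w hw))
      fun v hv => csInf_le hbdd ⟨v, hv, rfl⟩,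
    Submodule.mem_sup_right (Submodule.mem_span_singleton_self c), fun b hb => ?_⟩
  rw [LinearPMap.supSpanSingleton_apply_self]
  exact le_csInf hne hb

end RieszExtension

section Riesz

variable {K : Type*} [TopologicalSpace K] [CompactSpace K] [T2Space K] [MeasurableSpace K]
  [BorelSpace K]

theorem exists_measure_integral_eq (g : C(K, ℝ) →ₗ[ℝ] ℝ) (hg : ∀ f, 0 ≤ f → 0 ≤ g f) :
    ∃ π : Measure K, ∀ f : C(K, ℝ), ∫ x, f x ∂π = g f := by
  let e := CompactlySupportedContinuousMap.continuousMapEquiv (α := K) (β := ℝ)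
  let P : CompactlySupportedContinuousMap K ℝ →ₚ[ℝ] ℝ := .mk₀
    { toFun := fun f => g (e.symm f)
      map_add' := fun f f' => map_add g (e.symm f) (e.symm f')
      map_smul' := fun a f => map_smul g a (e.symm f) } fun f hf => hg _ hf
  exact ⟨RealRMK.rieszMeasure P, fun f => RealRMK.integral_rieszMeasure P (e f)⟩

theorem exists_measure_isGLB (V : Submodule ℝ C(K, ℝ)) (hV : 1 ∈ V) (ν : Measure K)
    [IsProbabilityMeasure ν] (c : C(K, ℝ)) :
    ∃ π : Measure K, IsProbabilityMeasure π ∧ (∀ v ∈ V, ∫ x, v x ∂π = ∫ x, v x ∂ν) ∧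
      IsGLB {r | ∃ v ∈ V, c ≤ v ∧ ∫ x, v x ∂ν = r} (∫ x, c x ∂π) := by
  have hint : ∀ f : C(K, ℝ), Integrable f ν := fun f =>
    f.continuous.integrable_of_hasCompactSupport (.of_compactSpace f)
  let ℓ : C(K, ℝ) →ₗ[ℝ] ℝ :=
    { toFun := fun f => ∫ x, f x ∂ν
      map_add' := fun f g => integral_add (hint f) (hint g)
      map_smul' := fun a f => integral_const_mul a f }
  obtain ⟨g, hgV, hg, hglb⟩ := exists_nonneg_extension_isGLB
    (PointedCone.positive ℝ C(K, ℝ)) (ℓ.toPMap V) (fun v hv => integral_nonneg hv)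
    (fun f => ⟨⟨‖f‖ • 1, V.smul_mem _ hV⟩, fun x => by
      simpa [neg_le_iff_add_nonneg'] using neg_le_of_abs_le (f.norm_coe_le_norm x)⟩) c
  obtain ⟨π, hπ⟩ := exists_measure_integral_eq g hg
  have hπV : ∀ v ∈ V, ∫ x, v x ∂π = ∫ x, v x ∂ν := fun v hv => (hπ v).trans (hgV ⟨v, hv⟩)
  refine ⟨π, ?_, hπV, ?_⟩
  · have h := hπV 1 hV
    simpa [measureReal_def, isProbabilityMeasure_iff, ENNReal.toReal_eq_one_iff] using h
  · rw [hπ]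
    convert hglb using 2
    ext r
    simp [ℓ, and_left_comm]

end Riesz

theorem exists_measure_isGLB_of_isCompact {X : Type*} [TopologicalSpace X] [T2Space X]
    [MeasurableSpace X] [BorelSpace X] {K : Set X} (hK : IsCompact K)
    (V : Submodule ℝ C(X, ℝ)) (hV : 1 ∈ V) (ν : Measure X) [IsProbabilityMeasure ν]
    (hν : ∀ᵐ x ∂ν, x ∈ K) (c : C(X, ℝ)) :
    ∃ π : Measure X, IsProbabilityMeasure π ∧ (∀ᵐ x ∂π, x ∈ K) ∧
      (∀ v ∈ V, ∫ x, v x ∂π = ∫ x, v x ∂ν) ∧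
      IsGLB {r | ∃ v ∈ V, (∀ x ∈ K, c x ≤ v x) ∧ ∫ x, v x ∂ν = r} (∫ x, c x ∂π) := by
  have : CompactSpace K := isCompact_iff_compactSpace.mp hK
  have hval : MeasurableEmbedding (Subtype.val : K → X) := .subtype_coe hK.measurableSet
  have hνmap : (ν.comap (Subtype.val : K → X)).map Subtype.val = ν := by
    rw [map_comap_subtype_coe hK.measurableSet, Measure.restrict_eq_self_of_ae_mem hν]
  have : IsProbabilityMeasure (ν.comap (Subtype.val : K → X)) :=
    hval.isProbabilityMeasure_comap (by simpa using hν)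
  have hint : ∀ f : X → ℝ, ∫ x : K, f x ∂ν.comap (Subtype.val : K → X) = ∫ x, f x ∂ν := fun f => by
    rw [← hval.integral_map, hνmap]
  let restr := (ContinuousMap.compRightAlgHom ℝ ℝ
    (⟨Subtype.val, continuous_subtype_val⟩ : C(K, X))).toLinearMap
  obtain ⟨π, hπ, hπV, hglb⟩ := exists_measure_isGLB (V.map restr)
    ⟨1, hV, rfl⟩ (ν.comap Subtype.val) (restr c)
  refine ⟨π.map Subtype.val, Measure.isProbabilityMeasure_map hval.measurable.aemeasurable,
    hval.ae_map_iff.2 (.of_forall Subtype.property), fun v hv => ?_, ?_⟩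
  · rw [hval.integral_map, ← hint v]
    exact hπV _ ⟨v, hv, rfl⟩
  · rw [hval.integral_map]
    change IsGLB _ (∫ x, restr c x ∂π)
    convert hglb using 2
    ext r
    simp [restr, hint, ContinuousMap.le_def]

section SeparatesFiniteMeasures

variable {E : Type*} [MeasurableSpace E]

/-- The functions of `𝓕` determine a finite measure by their integrals. Functions that are not
integrable count with integral `0`. -/
def SeparatesFiniteMeasures (𝓕 : Set (E → ℝ)) : Prop :=
  ∀ (ρ ρ' : Measure E) [IsFiniteMeasure ρ] [IsFiniteMeasure ρ'],
    (∀ F ∈ 𝓕, ∫ y, F y ∂ρ = ∫ y, F y ∂ρ') → ρ = ρ'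

variable {Ω : Type*} [MeasurableSpace Ω] {π : Measure Ω} {r : Ω → E} {D : Ω → ℝ} {F : E → ℝ}

theorem isFiniteMeasure_map_withDensity_ofReal (r : Ω → E) (hD : Integrable D π) :
    IsFiniteMeasure ((π.withDensity fun ω => ENNReal.ofReal (D ω)).map r) := by
  have := isFiniteMeasure_withDensity_ofReal hD.2
  exact Measure.isFiniteMeasure_map _ _

theorem integral_map_withDensity_ofReal (hr : Measurable r) (hD : AEMeasurable D π)
    (hF : Measurable F) :
    ∫ y, F y ∂(π.withDensity fun ω => ENNReal.ofReal (D ω)).map r =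
      ∫ ω, F (r ω) * max (D ω) 0 ∂π := by
  rw [integral_map hr.aemeasurable hF.aestronglyMeasurable,
    integral_withDensity_eq_integral_toReal_smul₀ hD.ennreal_ofReal
      (.of_forall fun _ => ENNReal.ofReal_lt_top)]
  simp only [ENNReal.toReal_ofReal', smul_eq_mul, mul_comm]

theorem integral_map_withDensity_sub (hr : Measurable r) (hD : AEMeasurable D π)
    (hF : Measurable F) (hFD : Integrable (fun ω => F (r ω) * D ω) π) :
    ∫ y, F y ∂(π.withDensity fun ω => ENNReal.ofReal (D ω)).map r -
      ∫ y, F y ∂(π.withDensity fun ω => ENNReal.ofReal (-D ω)).map r =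
        ∫ ω, F (r ω) * D ω ∂π := by
  have hpart (s : ℝ) (hs : |s| = 1) :
      Integrable (fun ω => F (r ω) * max (s * D ω) 0) π := by
    refine hFD.mono (((hF.comp hr).aemeasurable.mul
      ((hD.const_mul s).max aemeasurable_const)).aestronglyMeasurable) (.of_forall fun ω => ?_)
    rw [norm_mul, norm_mul]
    gcongr
    simpa [abs_mul, hs, abs_of_nonneg] using le_abs_self (s * D ω)
  rw [integral_map_withDensity_ofReal hr hD hF, integral_map_withDensity_ofReal hr hD.fun_neg hF,
    ← integral_sub (by simpa using hpart 1 (by simp)) (by simpa using hpart (-1) (by simp))]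
  simp only [← mul_sub, max_zero_sub_max_neg_zero_eq_self]

theorem SeparatesFiniteMeasures.condExp_ae_eq_zero [IsFiniteMeasure π] {𝓕 : Set (E → ℝ)}
    (h𝓕 : SeparatesFiniteMeasures 𝓕) (hmeas : ∀ F ∈ 𝓕, Measurable F) (hr : Measurable r)
    (hD : Integrable D π) (hint : ∀ F ∈ 𝓕, Integrable (fun ω => F (r ω) * D ω) π)
    (hzero : ∀ F ∈ 𝓕, ∫ ω, F (r ω) * D ω ∂π = 0) :
    π[D | MeasurableSpace.comap r inferInstance] =ᵐ[π] 0 := by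
  have := isFiniteMeasure_map_withDensity_ofReal r hD
  have := isFiniteMeasure_map_withDensity_ofReal r hD.neg
  have heq : (π.withDensity fun ω => ENNReal.ofReal (D ω)).map r =
      (π.withDensity fun ω => ENNReal.ofReal (-D ω)).map r := by
    refine h𝓕 _ _ fun F hF => sub_eq_zero.1 ?_
    rw [integral_map_withDensity_sub hr hD.aemeasurable (hmeas F hF) (hint F hF), hzero F hF]
  refine (ae_eq_condExp_of_forall_setIntegral_eq hr.comap_le hD
    (fun _ _ _ => integrableOn_zero) ?_ aestronglyMeasurable_zero).symm
  rintro _ ⟨A, hA, rfl⟩ -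
  have hind : (fun ω => A.indicator 1 (r ω) * D ω) = (r ⁻¹' A).indicator D := by
    ext ω
    by_cases hω : r ω ∈ A <;> simp [hω]
  have hsub := integral_map_withDensity_sub hr hD.aemeasurable (measurable_one.indicator hA)
    (by rw [hind]; exact hD.indicator (hr hA))
  rw [heq, sub_self, hind, integral_indicator (hr hA)] at hsub
  simpa using hsub

end SeparatesFiniteMeasures

section Discriminatory

/-- A discriminatory activation in the sense of Cybenko, on the line and for finite positive
measures: the functions `y ↦ ψ (a * y + b)` separate them. -/
def IsDiscriminatory (ψ : ℝ → ℝ) : Prop :=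
  SeparatesFiniteMeasures (Set.range fun (p : ℝ × ℝ) y => ψ (p.1 * y + p.2))

theorem tendsto_sq_mul_add_atTop {z : ℝ} (hz : 0 ≤ z) :
    Tendsto (fun n : ℕ => (n : ℝ) ^ 2 * z + n) atTop atTop :=
  tendsto_natCast_atTop_atTop.nonneg_add_atTop fun n => by positivity

theorem tendsto_sq_mul_add_atBot {z : ℝ} (hz : z < 0) :
    Tendsto (fun n : ℕ => (n : ℝ) ^ 2 * z + n) atTop atBot := by
  have h : Tendsto (fun n : ℝ => n * (n * z + 1)) atTop atBot :=
    tendsto_id.atTop_mul_atBot₀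
      (tendsto_atBot_add_const_right _ _ (tendsto_id.atTop_mul_const_of_neg hz))
  exact (h.comp tendsto_natCast_atTop_atTop).congr fun n => by simp only [Function.comp]; ring

variable {ψ : ℝ → ℝ} {a b : ℝ}

-- The shift by `n` makes the point `t` itself contribute the upper limit `b`, so that the closed
-- half-line appears.
theorem tendsto_integral_steep (hψ : Measurable ψ) {C : ℝ} (hC : ∀ x, |ψ x| ≤ C)
    (ha : Tendsto ψ atBot (nhds a)) (hb : Tendsto ψ atTop (nhds b))
    (ρ : Measure ℝ) [IsFiniteMeasure ρ] (t : ℝ) :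
    Tendsto (fun n : ℕ => ∫ y, ψ ((n : ℝ) ^ 2 * (y - t) + n) ∂ρ) atTop
      (nhds (a * ρ.real Set.univ + (b - a) * ρ.real (Set.Ici t))) := by
  have hlim : ∫ y, (a + (Set.Ici t).indicator (fun _ => b - a) y) ∂ρ =
      a * ρ.real Set.univ + (b - a) * ρ.real (Set.Ici t) := by
    rw [integral_add (integrable_const a) ((integrable_const _).indicator measurableSet_Ici),
      integral_indicator_const _ measurableSet_Ici]
    simp [mul_comm]
  rw [← hlim]
  refine tendsto_integral_of_dominated_convergence (fun _ => C)
    (fun n => (hψ.comp (by fun_prop)).aestronglyMeasurable) (integrable_const C)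
    (fun n => .of_forall fun y => hC _) (.of_forall fun y => ?_)
  rcases le_or_gt t y with hy | hy
  · simpa [hy, Function.comp_def] using hb.comp (tendsto_sq_mul_add_atTop (sub_nonneg.2 hy))
  · simpa [hy, Function.comp_def] using ha.comp (tendsto_sq_mul_add_atBot (sub_neg.2 hy))

theorem isDiscriminatory_of_tendsto (hψ : Measurable ψ) {C : ℝ} (hC : ∀ x, |ψ x| ≤ C)
    (ha : Tendsto ψ atBot (nhds a)) (hb : Tendsto ψ atTop (nhds b)) (hab : a ≠ b) :
    IsDiscriminatory ψ := by
  intro ρ ρ' _ _ h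
  have haffine : ∀ u v, ∫ y, ψ (u * y + v) ∂ρ = ∫ y, ψ (u * y + v) ∂ρ' := fun u v =>
    h _ ⟨(u, v), rfl⟩
  have hmass : ρ.real Set.univ = ρ'.real Set.univ := by
    obtain ⟨z, hz⟩ : ∃ z, ψ z ≠ 0 := by
      by_contra! hψ0
      obtain rfl : ψ = fun _ => 0 := funext hψ0
      exact hab ((tendsto_nhds_unique ha tendsto_const_nhds).trans
        (tendsto_nhds_unique hb tendsto_const_nhds).symm)
    simpa [hz] using haffine 0 z
  refine Measure.ext_of_Ici ρ ρ' fun t => ?_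
  have hlim := tendsto_nhds_unique (tendsto_integral_steep hψ hC ha hb ρ t)
    ((tendsto_integral_steep hψ hC ha hb ρ' t).congr fun n => by
      simpa only [mul_sub, sub_add_eq_add_sub, add_sub_assoc] using (haffine _ _).symm)
  rw [hmass, add_right_inj, mul_right_inj' (sub_ne_zero.2 hab.symm)] at hlim
  exact (measureReal_eq_measureReal_iff).1 hlim

theorem isDiscriminatory_of_monotone (hψ : Monotone ψ) (hbdd : ∃ C, ∀ x, |ψ x| ≤ C)
    (hne : ∃ x y, ψ x ≠ ψ y) : IsDiscriminatory ψ := by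
  obtain ⟨C, hC⟩ := hbdd
  have habove : BddAbove (Set.range ψ) := ⟨C, Set.forall_mem_range.2 fun x => (abs_le.1 (hC x)).2⟩
  have hbelow : BddBelow (Set.range ψ) := ⟨-C, Set.forall_mem_range.2 fun x => (abs_le.1 (hC x)).1⟩
  refine isDiscriminatory_of_tendsto hψ.measurable hC (tendsto_atBot_ciInf hψ hbelow)
    (tendsto_atTop_ciSup hψ habove) fun heq => ?_
  have hconst : ∀ x, ψ x = ⨆ i, ψ i := fun x =>
    (le_ciSup habove x).antisymm (heq ▸ ciInf_le hbelow x)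
  obtain ⟨x, y, hxy⟩ := hne
  exact hxy ((hconst x).trans (hconst y).symm)

end Discriminatory

section NeuralNets

variable {ψ : ℝ → ℝ} {l k m m' : ℕ} {f g : (Fin k → ℝ) → ℝ}

theorem hiddenSeq_append (W : ℕ → Fin m → Fin m → ℝ) (b : ℕ → Fin m → ℝ) (v : Fin m → ℝ)
    (W' : ℕ → Fin m' → Fin m' → ℝ) (b' : ℕ → Fin m' → ℝ) (v' : Fin m' → ℝ) (n : ℕ) :
    hiddenSeq ψ
        (fun j => Fin.append (fun i => Fin.append (W j i) 0) fun i => Fin.append 0 (W' j i))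
        (fun j => Fin.append (b j) (b' j)) (Fin.append v v') n =
      Fin.append (hiddenSeq ψ W b v n) (hiddenSeq ψ W' b' v' n) := by
  induction n with
  | zero => rfl
  | succ n ih =>
    funext i
    refine Fin.addCases (fun i => ?_) (fun i => ?_) i <;> simp [hiddenSeq, ih, Fin.sum_univ_add]

theorem hiddenSeq_congr {W W' : ℕ → Fin m → Fin m → ℝ} {b b' : ℕ → Fin m → ℝ} (v : Fin m → ℝ)
    {n : ℕ} (hW : ∀ j < n, W j = W' j) (hb : ∀ j < n, b j = b' j) :
    hiddenSeq ψ W b v n = hiddenSeq ψ W' b' v n := by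
  induction n with
  | zero => rfl
  | succ n ih =>
    funext i
    simp only [hiddenSeq, ih (fun j hj => hW j (hj.trans n.lt_succ_self))
      (fun j hj => hb j (hj.trans n.lt_succ_self)), hW n n.lt_succ_self, hb n n.lt_succ_self]

theorem continuous_hiddenSeq (hψ : Continuous ψ) (W : ℕ → Fin m → Fin m → ℝ)
    (b : ℕ → Fin m → ℝ) (n : ℕ) : Continuous fun v => hiddenSeq ψ W b v n := by
  induction n with
  | zero => exact continuous_id
  | succ n ih =>
    have (i : Fin m) : Continuous fun v => hiddenSeq ψ W b v n i := (continuous_apply i).comp ih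
    simp only [hiddenSeq]
    fun_prop

namespace IsNeuralNet

theorem const (ψ : ℝ → ℝ) (l k m : ℕ) (a : ℝ) : IsNeuralNet ψ l k m fun _ => a :=
  ⟨0, 0, 0, 0, 0, a, fun x => by simp⟩

theorem const_mul (a : ℝ) (hf : IsNeuralNet ψ l k m f) :
    IsNeuralNet ψ l k m fun x => a * f x := by
  obtain ⟨W₀, b₀, W, b, w, β, hf⟩ := hf
  refine ⟨W₀, b₀, W, b, fun j => a * w j, a * β, fun x => ?_⟩
  simp only [hf x, mul_add, Finset.mul_sum, mul_assoc]

theorem add (hf : IsNeuralNet ψ l k m f) (hg : IsNeuralNet ψ l k m' g) :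
    IsNeuralNet ψ l k (m + m') fun x => f x + g x := by
  obtain ⟨W₀, b₀, W, b, w, β, hf⟩ := hf
  obtain ⟨W₀', b₀', W', b', w', β', hg⟩ := hg
  refine ⟨Fin.append W₀ W₀', Fin.append b₀ b₀',
    fun j => Fin.append (fun i => Fin.append (W j i) 0) fun i => Fin.append 0 (W' j i),
    fun j => Fin.append (b j) (b' j), Fin.append w w', β + β', fun x => ?_⟩
  have hfirst : (fun i => ψ ((∑ i', Fin.append W₀ W₀' i i' * x i') + Fin.append b₀ b₀' i)) =
      Fin.append (fun i => ψ ((∑ i', W₀ i i' * x i') + b₀ i))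
        fun i => ψ ((∑ i', W₀' i i' * x i') + b₀' i) := by
    funext i
    refine Fin.addCases (fun i => ?_) (fun i => ?_) i <;> simp
  simp only [hfirst, hiddenSeq_append W b _ W' b' _, hf x, hg x, Fin.sum_univ_add,
    Fin.append_left, Fin.append_right]
  ring

theorem mono (hm : m ≤ m') (hf : IsNeuralNet ψ l k m f) : IsNeuralNet ψ l k m' f := by
  obtain ⟨n, rfl⟩ := Nat.exists_eq_add_of_le hm
  simpa using hf.add (const ψ l k n 0)

theorem ridge (ψ : ℝ → ℝ) (w : Fin k → ℝ) (b : ℝ) :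
    IsNeuralNet ψ 1 k 1 fun x => ψ ((∑ i, w i * x i) + b) :=
  ⟨fun _ => w, fun _ => b, 0, 0, 1, 0, fun x => by simp [hiddenSeq]⟩

theorem activation (hl : 1 ≤ l) (hf : IsNeuralNet ψ l k m f) :
    IsNeuralNet ψ (l + 1) k m fun x => ψ (f x) := by
  obtain ⟨W₀, b₀, W, b, w, β, hf⟩ := hf
  obtain ⟨n, rfl⟩ := Nat.exists_eq_add_of_le' hl
  rcases m with _ | m
  · have hconst : (fun x => ψ (f x)) = fun _ => ψ β := by
      funext x
      simp [hf x]
    rw [hconst]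
    exact const _ _ _ _ _
  · refine ⟨W₀, b₀, fun j => if j = n then fun _ => w else W j,
      fun j => if j = n then fun _ => β else b j, Pi.single 0 1, 0, fun x => ?_⟩
    rw [Nat.add_sub_cancel] at hf ⊢
    simp only [hiddenSeq, hf x, Pi.single_apply, ite_mul, one_mul, zero_mul, Finset.sum_ite_eq',
      Finset.mem_univ, if_true, add_zero]
    rw [hiddenSeq_congr (W' := W) (b' := b) _ (fun j hj => if_neg hj.ne)
      fun j hj => if_neg hj.ne]

theorem continuous (hψ : Continuous ψ) (hf : IsNeuralNet ψ l k m f) : Continuous f := by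
  obtain ⟨W₀, b₀, W, b, w, β, hf⟩ := hf
  have hfirst : Continuous fun (x : Fin k → ℝ) i => ψ ((∑ i', W₀ i i' * x i') + b₀ i) := by
    fun_prop
  have hlast (j : Fin m) := (continuous_apply j).comp
    ((continuous_hiddenSeq hψ W b (l - 1)).comp hfirst)
  rw [funext hf]
  exact (continuous_finsetSum _ fun j _ => (hlast j).const_mul (w j)).add continuous_const

end IsNeuralNet

/-- The class `⋃ₘ 𝔑_{l,k,m}` of all networks `ℝ^k → ℝ` with `l` layers. -/
def neuralNets (ψ : ℝ → ℝ) (l k : ℕ) : Set ((Fin k → ℝ) → ℝ) :=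
  {F | ∃ m, IsNeuralNet ψ l k m F}

theorem IsDiscriminatory.separatesFiniteMeasures_neuralNets_one (hψ : IsDiscriminatory ψ)
    (hψcont : Continuous ψ) (k : ℕ) : SeparatesFiniteMeasures (neuralNets ψ 1 k) := by
  intro ρ ρ' _ _ h
  have hridge (L : StrongDual ℝ (Fin k → ℝ)) : ρ.map L = ρ'.map L := by
    refine hψ _ _ ?_
    rintro _ ⟨⟨a, b⟩, rfl⟩
    have hL (x : Fin k → ℝ) : ∑ i, a * L (Pi.single i 1) * x i = a * L x := by
      conv_rhs => rw [pi_eq_sum_univ' x, map_sum, Finset.mul_sum]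
      simp [mul_comm, mul_left_comm]
    have hmeas : Continuous fun y => ψ (a * y + b) := by fun_prop
    rw [integral_map (by fun_prop) hmeas.aestronglyMeasurable,
      integral_map (by fun_prop) hmeas.aestronglyMeasurable]
    simpa only [hL] using h _ ⟨1, .ridge ψ (fun i => a * L (Pi.single i 1)) b⟩
  refine Measure.ext_of_charFunDual (funext fun L => ?_)
  rw [charFunDual_eq_charFun_map_one, charFunDual_eq_charFun_map_one, hridge L]

theorem IsDiscriminatory.separatesFiniteMeasures_neuralNets (hψ : IsDiscriminatory ψ)
    (hψcont : Continuous ψ) (hl : 1 ≤ l) (k : ℕ) :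
    SeparatesFiniteMeasures (neuralNets ψ l k) := by
  induction l, hl using Nat.le_induction with
  | base => exact hψ.separatesFiniteMeasures_neuralNets_one hψcont k
  | succ l hl ih =>
    intro ρ ρ' _ _ h
    refine ih ρ ρ' ?_
    rintro F ⟨m, hF⟩
    have hFmeas := (hF.continuous hψcont).measurable
    have hmap : ρ.map F = ρ'.map F := by
      refine hψ _ _ ?_
      rintro _ ⟨⟨a, b⟩, rfl⟩
      have hmeas : Continuous fun y => ψ (a * y + b) := by fun_prop
      rw [integral_map hFmeas.aemeasurable hmeas.aestronglyMeasurable,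
        integral_map hFmeas.aemeasurable hmeas.aestronglyMeasurable]
      exact h _ ⟨_, ((hF.const_mul a).add (.const ψ l k 0 b)).activation hl⟩
    have hint (ρ : Measure (Fin k → ℝ)) : ∫ x, F x ∂ρ = ∫ y, y ∂ρ.map F :=
      (integral_map hFmeas.aemeasurable aestronglyMeasurable_id).symm
    rw [hint, hint, hmap]

end NeuralNets

section LocallyCentered

variable {Ω : Type*} {m m₀ : MeasurableSpace Ω} {π : Measure Ω} {Z Z' G : Ω → ℝ}

/-- A version of `π[Z | m] = 0` that makes sense without integrability of `Z`: along a sequence of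
`m`-measurable sets exhausting `Ω`, the variable `Z` is integrable with integral zero over every
`m`-measurable subset. -/
def IsLocallyCentered (m : MeasurableSpace Ω) {_ : MeasurableSpace Ω} (π : Measure Ω)
    (Z : Ω → ℝ) : Prop :=
  ∃ A : ℕ → Set Ω, (∀ N, MeasurableSet[m] (A N)) ∧ (∀ ω, ∀ᶠ N in atTop, ω ∈ A N) ∧
    ∀ N, ∀ B ⊆ A N, MeasurableSet[m] B → IntegrableOn Z B π ∧ ∫ ω in B, Z ω ∂π = 0

namespace IsLocallyCentered

theorem zero : IsLocallyCentered m π fun _ => 0 :=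
  ⟨fun _ => Set.univ, fun _ => .univ, fun _ => .of_forall fun _ => trivial,
    fun _ _ _ _ => ⟨integrableOn_zero, by simp⟩⟩

theorem add (hZ : IsLocallyCentered m π Z) (hZ' : IsLocallyCentered m π Z') :
    IsLocallyCentered m π fun ω => Z ω + Z' ω := by
  obtain ⟨A, hA, hcover, hint⟩ := hZ
  obtain ⟨A', hA', hcover', hint'⟩ := hZ'
  refine ⟨fun N => A N ∩ A' N, fun N => (hA N).inter (hA' N),
    fun ω => (hcover ω).and (hcover' ω), fun N B hB hBm => ?_⟩
  obtain ⟨hi, h0⟩ := hint N B (hB.trans Set.inter_subset_left) hBm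
  obtain ⟨hi', h0'⟩ := hint' N B (hB.trans Set.inter_subset_right) hBm
  exact ⟨hi.add hi', by rw [integral_add hi hi', h0, h0', add_zero]⟩

theorem sum {ι : Type*} (s : Finset ι) {Z : ι → Ω → ℝ}
    (hZ : ∀ i ∈ s, IsLocallyCentered m π (Z i)) :
    IsLocallyCentered m π fun ω => ∑ i ∈ s, Z i ω := by
  induction s using Finset.cons_induction with
  | empty => simpa using zero
  | cons i s hi ih =>
    simp only [Finset.sum_cons]
    exact (hZ i (Finset.mem_cons_self i s)).add (ih fun j hj => hZ j (Finset.mem_cons_of_mem hj))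

theorem indicator (hm : m ≤ m₀) (hZ : IsLocallyCentered m π Z) {C : Set Ω}
    (hC : MeasurableSet[m] C) : IsLocallyCentered m π (C.indicator Z) := by
  obtain ⟨A, hA, hcover, hint⟩ := hZ
  refine ⟨A, hA, hcover, fun N B hB hBm => ?_⟩
  rw [setIntegral_indicator (hm _ hC)]
  obtain ⟨hi, -⟩ := hint N B hB hBm
  exact ⟨hi.indicator (hm _ hC),
    (hint N (B ∩ C) (Set.inter_subset_left.trans hB) (hBm.inter hC)).2⟩

theorem mul_of_condExp_ae_eq_zero [IsFiniteMeasure π] (hm : m ≤ m₀) {H ξ : Ω → ℝ}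
    (hH : StronglyMeasurable[m] H) (hξ : Integrable ξ π) (hξ0 : π[ξ | m] =ᵐ[π] 0) :
    IsLocallyCentered m π fun ω => H ω * ξ ω := by
  refine ⟨fun N => {ω | ‖H ω‖ ≤ N}, fun N => hH.norm.measurable measurableSet_Iic,
    fun ω => ?_, fun N B hB hBm => ?_⟩
  · filter_upwards [eventually_ge_atTop ⌈‖H ω‖⌉₊] with N hN using Nat.ceil_le.1 hN
  have hHB : StronglyMeasurable[m] (B.indicator H) := hH.indicator hBm
  have hbound : ∀ ω, ‖B.indicator H ω‖ ≤ N := fun ω => by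
    by_cases hω : ω ∈ B
    · simpa [hω] using hB hω
    · simp [hω]
  have hmul : B.indicator (fun ω => H ω * ξ ω) = B.indicator H * ξ :=
    funext fun ω => Set.indicator_mul_left B H ξ
  rw [← integrable_indicator_iff (hm _ hBm), ← integral_indicator (hm _ hBm), hmul]
  refine ⟨hξ.bdd_mul (hHB.mono hm).aestronglyMeasurable (.of_forall hbound), ?_⟩
  rw [← integral_condExp hm]
  refine integral_eq_zero_of_ae ?_
  filter_upwards [condExp_stronglyMeasurable_mul_of_bound hm hHB hξ N (.of_forall hbound), hξ0]
    with ω h h0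
  simp [h, h0]

theorem integrable_and_integral_eq_zero (hm : m ≤ m₀) (hZ : IsLocallyCentered m π Z)
    (hG : Integrable G π) (hGZ : ∀ᵐ ω ∂π, G ω ≤ Z ω) :
    Integrable Z π ∧ ∫ ω, Z ω ∂π = 0 := by
  obtain ⟨A, hA, hcover, hint⟩ := hZ
  have hcov : AECover π atTop A := ⟨.of_forall hcover, fun N => hm _ (hA N)⟩
  have hZA : ∀ N, IntegrableOn Z (A N) π ∧ ∫ ω in A N, Z ω ∂π = 0 := fun N =>
    hint N (A N) subset_rfl (hA N)
  have hnorm : ∀ᵐ ω ∂π, ‖Z ω‖ ≤ Z ω + 2 * ‖G ω‖ := by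
    filter_upwards [hGZ] with ω hω
    have := neg_le_of_abs_le (le_refl |G ω|)
    rw [Real.norm_eq_abs, Real.norm_eq_abs, abs_le]
    constructor <;> linarith [abs_nonneg (G ω)]
  have hZint : Integrable Z π := by
    refine hcov.integrable_of_integral_norm_bounded (∫ ω, 2 * ‖G ω‖ ∂π) (fun N => (hZA N).1)
      (.of_forall fun N => ?_)
    calc ∫ ω in A N, ‖Z ω‖ ∂π
        ≤ ∫ ω in A N, (Z ω + 2 * ‖G ω‖) ∂π :=
          integral_mono_ae (hZA N).1.norm ((hZA N).1.add (hG.norm.const_mul 2).integrableOn)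
            (ae_restrict_of_ae hnorm)
      _ = ∫ ω in A N, 2 * ‖G ω‖ ∂π := by
          rw [integral_add (hZA N).1 (hG.norm.const_mul 2).integrableOn, (hZA N).2, zero_add]
      _ ≤ ∫ ω, 2 * ‖G ω‖ ∂π :=
          setIntegral_le_integral (hG.norm.const_mul 2) (.of_forall fun ω => by positivity)
  refine ⟨hZint, tendsto_nhds_unique (hcov.integral_tendsto_of_countably_generated hZint) ?_⟩
  simp only [(hZA _).2, tendsto_const_nhds]

theorem exists_integrable_le (hm : m ≤ m₀) (hZ : IsLocallyCentered m π Z) {Y : Ω → ℝ}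
    (hY : Measurable[m] Y) (hG : Integrable G π) (hGYZ : ∀ᵐ ω ∂π, G ω ≤ Y ω + Z ω) :
    ∃ G', Integrable G' π ∧ ∀ᵐ ω ∂π, G' ω ≤ Y ω := by
  set C := {ω | Y ω < 0}
  have hC : MeasurableSet[m] C := hY measurableSet_Iio
  have hle : ∀ᵐ ω ∂π, -‖G ω‖ ≤ C.indicator Z ω := by
    filter_upwards [hGYZ] with ω hω
    by_cases hωC : ω ∈ C
    · rw [Set.indicator_of_mem hωC]
      have hYneg : Y ω < 0 := hωC
      linarith [neg_le_of_abs_le (le_refl |G ω|), Real.norm_eq_abs (G ω)]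
    · simp [hωC]
  obtain ⟨hCZ, -⟩ := (hZ.indicator hm hC).integrable_and_integral_eq_zero hm hG.norm.neg hle
  refine ⟨fun ω => -‖G ω‖ - ‖C.indicator Z ω‖, hG.norm.neg.sub hCZ.norm, ?_⟩
  filter_upwards [hGYZ] with ω hω
  by_cases hωC : ω ∈ C
  · rw [Set.indicator_of_mem hωC, Real.norm_eq_abs, Real.norm_eq_abs]
    linarith [neg_abs_le (G ω), le_abs_self (Z ω)]
  · have hYnonneg : 0 ≤ Y ω := not_lt.1 fun h => hωC h
    linarith [norm_nonneg (G ω), norm_nonneg (C.indicator Z ω)]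

theorem integrable_and_integral_sum_range_eq_zero {ℱ : Filtration ℕ m₀} {Z : ℕ → Ω → ℝ}
    (hZ : ∀ n, IsLocallyCentered (ℱ n) π (Z n)) (hmeas : ∀ n, Measurable[ℱ (n + 1)] (Z n))
    (n : ℕ) (hG : Integrable G π) (hGZ : ∀ᵐ ω ∂π, G ω ≤ ∑ k ∈ Finset.range n, Z k ω) :
    Integrable (fun ω => ∑ k ∈ Finset.range n, Z k ω) π ∧
      ∫ ω, ∑ k ∈ Finset.range n, Z k ω ∂π = 0 := by
  induction n generalizing G with
  | zero => simp
  | succ n ih =>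
    simp only [Finset.sum_range_succ] at hGZ ⊢
    have hpast : Measurable[ℱ n] fun ω => ∑ k ∈ Finset.range n, Z k ω :=
      Finset.measurable_fun_sum _ fun k hk =>
        (hmeas k).mono (ℱ.mono (Finset.mem_range.1 hk)) le_rfl
    obtain ⟨G', hG', hle⟩ := (hZ n).exists_integrable_le (ℱ.le n) hpast hG hGZ
    obtain ⟨hint, hzero⟩ := ih hG' hle
    obtain ⟨hintZ, hzeroZ⟩ := (hZ n).integrable_and_integral_eq_zero (ℱ.le n) (hG.sub hint)
      (hGZ.mono fun ω hω => sub_le_iff_le_add'.2 hω)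
    exact ⟨hint.add hintZ, by rw [integral_add hint hintZ, hzero, hzeroZ, add_zero]⟩

end IsLocallyCentered

end LocallyCentered

section PathSpace

variable {T d : ℕ} {π : Measure (Path T d)} {μ : Fin T → Fin d → Measure ℝ} {M : ℝ}

theorem pastSigma_le (t : ℕ) : pastSigma T d t ≤ MeasurableSpace.pi :=
  iSup₂_le fun s _ => (measurable_pi_apply s).comap_le

theorem pastSigma_mono : Monotone (pastSigma T d) := fun _ _ hst =>
  iSup_mono fun _ => iSup_const_mono fun hr => hr.trans hst

/-- The canonical filtration of path space. -/
noncomputable def pastFiltration (T d : ℕ) :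
    Filtration ℕ (MeasurableSpace.pi : MeasurableSpace (Path T d)) where
  seq := pastSigma T d
  mono' := pastSigma_mono
  le' := pastSigma_le

theorem measurable_pastSigma_apply {t : ℕ} {s : Fin T} (hs : (s : ℕ) ≤ t) (i : Fin d) :
    Measurable[pastSigma T d t] fun x : Path T d => x s i :=
  (measurable_pi_apply i).comp (measurable_iff_comap_le.2 (le_iSup₂_of_le s hs le_rfl))

theorem continuous_restrFlatten (t : ℕ) (ht : t + 1 < T) :
    Continuous (restrFlatten T d t ht) := by
  unfold restrFlatten
  fun_prop

theorem pastSigma_eq_comap_restrFlatten (t : ℕ) (ht : t + 1 < T) :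
    pastSigma T d t = MeasurableSpace.comap (restrFlatten T d t ht) MeasurableSpace.pi := by
  refine le_antisymm (iSup₂_le fun s hs => ?_) (measurable_iff_comap_le.1 ?_)
  · rw [← measurable_iff_comap_le]
    have hcoord : (fun x : Path T d => x s) =
        (fun v i => v (finProdFinEquiv (⟨s, Nat.lt_succ_of_le hs⟩, i))) ∘
          restrFlatten T d t ht := by
      funext x i
      simp only [Function.comp, restrFlatten, Equiv.symm_apply_apply]
      rfl
    rw [hcoord]
    exact Measurable.comp (by fun_prop) (comap_measurable _)
  · refine @measurable_pi_lambda _ _ _ (pastSigma T d t) _ _ fun j => ?_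
    exact measurable_pastSigma_apply (s := Fin.castLE ht.le (finProdFinEquiv.symm j).1)
      (Nat.le_of_lt_succ (finProdFinEquiv.symm j).1.2) _

theorem isCompact_cube (T d : ℕ) (M : ℝ) : IsCompact (cube T d M) := by
  have hpi : cube T d M = Set.univ.pi fun _ => Set.univ.pi fun _ => Set.Icc (-M) M := by
    ext x
    simp only [cube, Set.mem_ofPred_eq, Set.mem_univ_pi]
  rw [hpi]
  exact isCompact_univ_pi fun _ => isCompact_univ_pi fun _ => isCompact_Icc

theorem integrable_of_ae_mem_cube [IsFiniteMeasure π] (hπ : ∀ᵐ x ∂π, x ∈ cube T d M)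
    {f : Path T d → ℝ} (hf : Continuous f) : Integrable f π := by
  obtain ⟨C, hC⟩ := (isCompact_cube T d M).exists_bound_of_continuousOn hf.continuousOn
  exact .of_bound hf.aestronglyMeasurable C (hπ.mono hC)

theorem HasMarginals.ae_mem_cube (hπ : HasMarginals π μ)
    (hμ : ∀ t i, μ t i (Set.Icc (-M) M)ᶜ = 0) : ∀ᵐ x ∂π, x ∈ cube T d M := by
  simp only [cube, Set.mem_ofPred_eq, ae_all_iff]
  intro t i
  have h := hμ t i
  rwa [← hπ t i, Measure.map_apply (by fun_prop) measurableSet_Icc.compl] at h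

theorem HasMarginals.integrable_comp (hπ : HasMarginals π μ) {t : Fin T} {i : Fin d} {f : ℝ → ℝ}
    (hf : Integrable f (μ t i)) : Integrable (fun x => f (x t i)) π := by
  rw [← hπ t i] at hf
  exact hf.comp_measurable (by fun_prop)

theorem HasMarginals.integral_comp (hπ : HasMarginals π μ) {t : Fin T} {i : Fin d} {f : ℝ → ℝ}
    (hf : AEStronglyMeasurable f (μ t i)) : ∫ x, f (x t i) ∂π = ∫ y, f y ∂μ t i := by
  rw [← hπ t i] at hf ⊢
  exact (integral_map (Measurable.aemeasurable (by fun_prop)) hf).symm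

theorem isMartingaleMeasure_iff_condExp_sub_ae_eq_zero [IsFiniteMeasure π]
    (hint : ∀ t i, Integrable (fun x : Path T d => x t i) π) :
    IsMartingaleMeasure π ↔ ∀ (t : ℕ) (ht : t + 1 < T) (i : Fin d),
      π[fun x => x ⟨t + 1, ht⟩ i - x ⟨t, Nat.lt_of_succ_lt ht⟩ i | pastSigma T d t] =ᵐ[π] 0 := by
  refine forall₃_congr fun t ht i => ?_
  have hsub : π[fun x => x ⟨t + 1, ht⟩ i - x ⟨t, Nat.lt_of_succ_lt ht⟩ i | pastSigma T d t]
      =ᵐ[π] fun x => condNext π t ht i x - x ⟨t, Nat.lt_of_succ_lt ht⟩ i := by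
    have hpast := condExp_of_stronglyMeasurable (pastSigma_le t)
      (measurable_pastSigma_apply (s := ⟨t, Nat.lt_of_succ_lt ht⟩) le_rfl i).stronglyMeasurable
      (hint _ i)
    have h := condExp_sub (hint ⟨t + 1, ht⟩ i) (hint ⟨t, Nat.lt_of_succ_lt ht⟩ i)
      (pastSigma T d t)
    rwa [hpast] at h
  refine ⟨fun h => ?_, fun h => ?_⟩ <;> filter_upwards [hsub, h] with x hx hx0
  · exact hx.trans (sub_eq_zero.2 hx0)
  · exact sub_eq_zero.1 (hx.symm.trans hx0)

end PathSpace

section WeakDuality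

variable {T d : ℕ} {π μ₀ : Measure (Path T d)} {μ : Fin T → Fin d → Measure ℝ}
  {φ : Fin T → Fin d → ℝ → ℝ} {h : ∀ t : ℕ, t + 1 < T → Fin d → Path T d → ℝ}
  {c G : Path T d → ℝ} {M : ℝ}

/-- The gain `∑ i, h_{n,i} (X_{n+1,i} - X_{n,i})` of the strategy `h` over the period from `n` to
`n + 1`; it is `0` after the last period, so that `hedgeFn` contains a sum over all periods. -/
noncomputable def dynamicGain (h : ∀ t : ℕ, t + 1 < T → Fin d → Path T d → ℝ) (n : ℕ)
    (x : Path T d) : ℝ :=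
  ∑ i, if ht : n + 1 < T then
    h n ht i x * (x ⟨n + 1, ht⟩ i - x ⟨n, Nat.lt_of_succ_lt ht⟩ i) else 0

theorem hedgeFn_eq_add_sum_dynamicGain (φ : Fin T → Fin d → ℝ → ℝ)
    (h : ∀ t : ℕ, t + 1 < T → Fin d → Path T d → ℝ) (x : Path T d) :
    hedgeFn φ h x = (∑ t, ∑ i, φ t i (x t i)) + ∑ n ∈ Finset.range T, dynamicGain h n x := by
  rw [← Fin.sum_univ_eq_sum_range fun n => dynamicGain h n x]
  rfl

theorem measurable_dynamicGain (hh : ∀ t ht i, Measurable[pastSigma T d t] (h t ht i)) (n : ℕ) :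
    Measurable[pastSigma T d (n + 1)] (dynamicGain h n) := by
  refine Finset.measurable_fun_sum _ fun i _ => ?_
  by_cases ht : n + 1 < T
  · simp only [dif_pos ht]
    exact ((hh n ht i).mono (pastSigma_mono n.le_succ) le_rfl).mul
      ((measurable_pastSigma_apply le_rfl i).sub (measurable_pastSigma_apply n.le_succ i))
  · simp only [dif_neg ht, measurable_const]

theorem IsMartingaleMeasure.isLocallyCentered_mul_sub [IsFiniteMeasure π]
    (hπ : IsMartingaleMeasure π) (hint : ∀ t i, Integrable (fun x : Path T d => x t i) π)
    {t : ℕ} (ht : t + 1 < T) (i : Fin d) {H : Path T d → ℝ} (hH : Measurable[pastSigma T d t] H) :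
    IsLocallyCentered (pastSigma T d t) π
      fun x => H x * (x ⟨t + 1, ht⟩ i - x ⟨t, Nat.lt_of_succ_lt ht⟩ i) :=
  .mul_of_condExp_ae_eq_zero (pastSigma_le t) hH.stronglyMeasurable ((hint _ i).sub (hint _ i))
    ((isMartingaleMeasure_iff_condExp_sub_ae_eq_zero hint).1 hπ t ht i)

theorem IsMartingaleMeasure.isLocallyCentered_dynamicGain [IsFiniteMeasure π]
    (hπ : IsMartingaleMeasure π) (hint : ∀ t i, Integrable (fun x : Path T d => x t i) π)
    (hh : ∀ t ht i, Measurable[pastSigma T d t] (h t ht i)) (n : ℕ) :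
    IsLocallyCentered (pastSigma T d n) π (dynamicGain h n) := by
  refine .sum _ fun i _ => ?_
  by_cases ht : n + 1 < T
  · simpa only [dif_pos ht] using hπ.isLocallyCentered_mul_sub hint ht i (hh n ht i)
  · simpa only [dif_neg ht] using .zero

theorem IsMartingaleMeasure.integrable_hedgeFn_and_integral_eq [IsFiniteMeasure π]
    (hmart : IsMartingaleMeasure π) (hint : ∀ t i, Integrable (fun x : Path T d => x t i) π)
    (hmarg : HasMarginals π μ) (hφ : ∀ t i, Integrable (φ t i) (μ t i))
    (hh : ∀ t ht i, Measurable[pastSigma T d t] (h t ht i)) (hG : Integrable G π)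
    (hle : ∀ᵐ x ∂π, G x ≤ hedgeFn φ h x) :
    Integrable (hedgeFn φ h) π ∧ ∫ x, hedgeFn φ h x ∂π = ∑ t, ∑ i, ∫ y, φ t i y ∂μ t i := by
  have hφπ (t : Fin T) (i : Fin d) : Integrable (fun x => φ t i (x t i)) π :=
    hmarg.integrable_comp (hφ t i)
  have hstatic : Integrable (fun x => ∑ t, ∑ i, φ t i (x t i)) π :=
    integrable_finsetSum _ fun t _ => integrable_finsetSum _ fun i _ => hφπ t i
  simp only [funext (hedgeFn_eq_add_sum_dynamicGain φ h)] at hle ⊢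
  obtain ⟨hdyn, hzero⟩ := IsLocallyCentered.integrable_and_integral_sum_range_eq_zero
    (ℱ := pastFiltration T d) (hmart.isLocallyCentered_dynamicGain hint hh)
    (measurable_dynamicGain hh) T (hG.sub hstatic)
    (hle.mono fun x hx => sub_le_iff_le_add'.2 hx)
  refine ⟨hstatic.add hdyn, ?_⟩
  rw [integral_add hstatic hdyn, hzero, add_zero,
    integral_finsetSum _ fun t _ => integrable_finsetSum _ fun i _ => hφπ t i]
  simp only [integral_finsetSum _ fun i _ => hφπ _ i,
    hmarg.integral_comp (hφ _ _).aestronglyMeasurable]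

theorem integral_mem_lowerBounds_dualCubeVals (hμ : ∀ t i, μ t i (Set.Icc (-M) M)ᶜ = 0)
    (hc : Continuous c) (hμ₀ : μ₀ ∈ MartSet μ) (hπ : π ∈ MartSet μ) :
    ∫ x, c x ∂π ∈ lowerBounds (dualCubeVals μ μ₀ c M) := by
  rintro _ ⟨φ, h, hφ, hh, hle, rfl⟩
  have hhedge {ρ : Measure (Path T d)} (hρ : ρ ∈ MartSet μ) :
      Integrable c ρ ∧ (∀ᵐ x ∂ρ, c x ≤ hedgeFn φ h x) ∧ Integrable (hedgeFn φ h) ρ ∧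
        ∫ x, hedgeFn φ h x ∂ρ = ∑ t, ∑ i, ∫ y, φ t i y ∂μ t i := by
    obtain ⟨_, hmarg, hmart⟩ := hρ
    have hcube := hmarg.ae_mem_cube hμ
    have hcint := integrable_of_ae_mem_cube hcube hc
    exact ⟨hcint, hcube.mono hle, hmart.integrable_hedgeFn_and_integral_eq
      (fun t i => integrable_of_ae_mem_cube hcube (by fun_prop)) hmarg hφ hh hcint
      (hcube.mono hle)⟩
  obtain ⟨hcint, hae, hint, heq⟩ := hhedge hπ
  rw [(hhedge hμ₀).2.2.2, ← heq]
  exact integral_mono_ae hcint hint hae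

end WeakDuality

section NeuralHedges

variable {T d : ℕ} {ψ : ℝ → ℝ} {l m m' : ℕ} {φ φ' : Fin T → Fin d → ℝ → ℝ}
  {h h' : ∀ t : ℕ, t + 1 < T → Fin d → Path T d → ℝ}

theorem hedgeFn_add (φ φ' : Fin T → Fin d → ℝ → ℝ)
    (h h' : ∀ t : ℕ, t + 1 < T → Fin d → Path T d → ℝ) (x : Path T d) :
    hedgeFn (fun t i y => φ t i y + φ' t i y) (fun t ht i x => h t ht i x + h' t ht i x) x =
      hedgeFn φ h x + hedgeFn φ' h' x := by
  have hgain (t : Fin T) (i : Fin d) (r : (t : ℕ) + 1 < T → ℝ) (r' : (t : ℕ) + 1 < T → ℝ) :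
      (if ht : (t : ℕ) + 1 < T then (r ht + r' ht) * (x ⟨(t : ℕ) + 1, ht⟩ i - x t i) else 0) =
        (if ht : (t : ℕ) + 1 < T then r ht * (x ⟨(t : ℕ) + 1, ht⟩ i - x t i) else 0) +
          if ht : (t : ℕ) + 1 < T then r' ht * (x ⟨(t : ℕ) + 1, ht⟩ i - x t i) else 0 := by
    split_ifs <;> ring
  simp only [hedgeFn, hgain, Finset.sum_add_distrib]
  ring

theorem hedgeFn_const_mul (a : ℝ) (φ : Fin T → Fin d → ℝ → ℝ)
    (h : ∀ t : ℕ, t + 1 < T → Fin d → Path T d → ℝ) (x : Path T d) :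
    hedgeFn (fun t i y => a * φ t i y) (fun t ht i x => a * h t ht i x) x = a * hedgeFn φ h x := by
  simp only [hedgeFn, mul_assoc, mul_add, Finset.mul_sum, mul_dite, mul_zero]

theorem continuous_hedgeFn (hφ : ∀ t i, Continuous (φ t i)) (hh : ∀ t ht i, Continuous (h t ht i)) :
    Continuous (hedgeFn φ h) := by
  refine .add (by fun_prop) (continuous_finsetSum _ fun t _ => continuous_finsetSum _ fun i _ => ?_)
  by_cases ht : (t : ℕ) + 1 < T
  · simp only [dif_pos ht]
    fun_prop
  · simp only [dif_neg ht, continuous_const]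

namespace NNHedge

theorem zero (ψ : ℝ → ℝ) (l m : ℕ) :
    NNHedge ψ l m (T := T) (d := d) (fun _ _ _ => 0) fun _ _ _ _ => 0 :=
  ⟨fun _ _ => ⟨_, .const ψ l 1 m 0, fun _ => rfl⟩, fun _ _ _ => ⟨_, .const ψ l _ m 0, fun _ => rfl⟩⟩

theorem add (H : NNHedge ψ l m φ h) (H' : NNHedge ψ l m' φ' h') :
    NNHedge ψ l (m + m') (fun t i y => φ t i y + φ' t i y)
      fun t ht i x => h t ht i x + h' t ht i x := by
  refine ⟨fun t i => ?_, fun t ht i => ?_⟩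
  · obtain ⟨⟨F, hF, hφ⟩, F', hF', hφ'⟩ := H.1 t i, H'.1 t i
    exact ⟨_, hF.add hF', fun y => by simp only [hφ, hφ']⟩
  · obtain ⟨⟨F, hF, hh⟩, F', hF', hh'⟩ := H.2 t ht i, H'.2 t ht i
    exact ⟨_, hF.add hF', fun x => by simp only [hh, hh']⟩

theorem const_mul (a : ℝ) (H : NNHedge ψ l m φ h) :
    NNHedge ψ l m (fun t i y => a * φ t i y) fun t ht i x => a * h t ht i x := by
  refine ⟨fun t i => ?_, fun t ht i => ?_⟩
  · obtain ⟨F, hF, hφ⟩ := H.1 t i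
    exact ⟨_, hF.const_mul a, fun y => by simp only [hφ]⟩
  · obtain ⟨F, hF, hh⟩ := H.2 t ht i
    exact ⟨_, hF.const_mul a, fun x => by simp only [hh]⟩

theorem mono (hm : m ≤ m') (H : NNHedge ψ l m φ h) : NNHedge ψ l m' φ h :=
  ⟨fun t i => (H.1 t i).imp fun _ hF => hF.imp_left (.mono hm),
    fun t ht i => (H.2 t ht i).imp fun _ hF => hF.imp_left (.mono hm)⟩

theorem continuous_static (hψ : Continuous ψ) (H : NNHedge ψ l m φ h) (t : Fin T) (i : Fin d) :
    Continuous (φ t i) := by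
  obtain ⟨F, hF, hφ⟩ := H.1 t i
  rw [funext hφ]
  exact (hF.continuous hψ).comp (by fun_prop)

theorem continuous_dynamic (hψ : Continuous ψ) (H : NNHedge ψ l m φ h) (t : ℕ) (ht : t + 1 < T)
    (i : Fin d) : Continuous (h t ht i) := by
  obtain ⟨F, hF, hh⟩ := H.2 t ht i
  rw [funext hh]
  exact (hF.continuous hψ).comp (continuous_restrFlatten t ht)

theorem measurable_dynamic (hψ : Continuous ψ) (H : NNHedge ψ l m φ h) (t : ℕ) (ht : t + 1 < T)
    (i : Fin d) : Measurable[pastSigma T d t] (h t ht i) := by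
  obtain ⟨F, hF, hh⟩ := H.2 t ht i
  rw [funext hh, pastSigma_eq_comap_restrFlatten t ht]
  exact (hF.continuous hψ).measurable.comp (comap_measurable _)

theorem continuous (hψ : Continuous ψ) (H : NNHedge ψ l m φ h) : Continuous (hedgeFn φ h) :=
  continuous_hedgeFn (H.continuous_static hψ) (H.continuous_dynamic hψ)

end NNHedge

theorem IsNeuralNet.exists_nnHedge_static {F : (Fin 1 → ℝ) → ℝ} (hF : IsNeuralNet ψ l 1 m F)
    (t : Fin T) (i : Fin d) : ∃ (φ : Fin T → Fin d → ℝ → ℝ) (h : _),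
      NNHedge ψ l m φ h ∧ ∀ x, hedgeFn φ h x = F fun _ => x t i := by
  refine ⟨fun t' i' y => if t' = t ∧ i' = i then F fun _ => y else 0, fun _ _ _ _ => 0,
    ⟨fun t' i' => ?_, (NNHedge.zero ψ l m).2⟩, fun x => ?_⟩
  · by_cases hti : t' = t ∧ i' = i
    · exact ⟨F, hF, fun _ => if_pos hti⟩
    · exact ⟨_, .const ψ l 1 m 0, fun _ => if_neg hti⟩
  · simp [hedgeFn, ite_and]

theorem IsNeuralNet.exists_nnHedge_dynamic {t : ℕ} (ht : t + 1 < T)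
    {F : (Fin ((t + 1) * d) → ℝ) → ℝ} (hF : IsNeuralNet ψ l ((t + 1) * d) m F) (i : Fin d) :
    ∃ (φ : Fin T → Fin d → ℝ → ℝ) (h : _), NNHedge ψ l m φ h ∧ ∀ x, hedgeFn φ h x =
      F (restrFlatten T d t ht x) * (x ⟨t + 1, ht⟩ i - x ⟨t, Nat.lt_of_succ_lt ht⟩ i) := by
  refine ⟨fun _ _ _ => 0,
    fun t' _ i' x => if t' = t ∧ i' = i then F (restrFlatten T d t ht x) else 0,
    ⟨(NNHedge.zero ψ l m (T := T) (d := d)).1, fun t' ht' i' => ?_⟩, fun x => ?_⟩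
  · by_cases hti : t' = t ∧ i' = i
    · obtain ⟨rfl, rfl⟩ := hti
      exact ⟨F, hF, fun _ => if_pos ⟨rfl, rfl⟩⟩
    · exact ⟨_, .const ψ l _ m 0, fun _ => if_neg hti⟩
  · have ht0 : t < T := Nat.lt_of_succ_lt ht
    have hother (s : Fin T) (hs : s ≠ ⟨t, ht0⟩) : (s : ℕ) ≠ t := Fin.ext_iff.not.1 hs
    simp only [hedgeFn, Finset.sum_const_zero, zero_add]
    rw [Fintype.sum_eq_single (⟨t, ht0⟩ : Fin T) fun s hs => by simp [hother s hs],
      Fintype.sum_eq_single i fun i' hi' => by simp [hi']]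
    simp [ht]

/-- The space `⋃ₘ 𝓗^m` of all hedging functions built from networks with `l` layers, as continuous
functions on path space. -/
def neuralHedges (T d : ℕ) (ψ : ℝ → ℝ) (l : ℕ) : Submodule ℝ C(Path T d, ℝ) where
  carrier := {v | ∃ m φ h, NNHedge ψ l m φ h ∧ ∀ x, v x = hedgeFn φ h x}
  zero_mem' := ⟨0, _, _, .zero ψ l 0, fun x => by simp [hedgeFn]⟩
  add_mem' := by
    rintro v w ⟨m, φ, h, H, hv⟩ ⟨m', φ', h', H', hw⟩
    exact ⟨_, _, _, H.add H', fun x => by rw [hedgeFn_add, ContinuousMap.add_apply, hv, hw]⟩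
  smul_mem' := by
    rintro a v ⟨m, φ, h, H, hv⟩
    exact ⟨_, _, _, H.const_mul a, fun x => by
      rw [hedgeFn_const_mul, ContinuousMap.smul_apply, hv, smul_eq_mul]⟩

theorem NNHedge.mem_neuralHedges (hψ : Continuous ψ) (H : NNHedge ψ l m φ h) :
    ⟨hedgeFn φ h, H.continuous hψ⟩ ∈ neuralHedges T d ψ l :=
  ⟨m, φ, h, H, fun _ => rfl⟩

theorem one_mem_neuralHedges (ψ : ℝ → ℝ) (l : ℕ) (t : Fin T) (i : Fin d) :
    1 ∈ neuralHedges T d ψ l := by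
  obtain ⟨φ, h, H, hφ⟩ := (IsNeuralNet.const ψ l 1 0 1).exists_nnHedge_static t i
  exact ⟨0, φ, h, H, fun x => (hφ x).symm⟩

end NeuralHedges

section Calibration

variable {T d : ℕ} {ψ : ℝ → ℝ} {l : ℕ} {π μ₀ : Measure (Path T d)} [IsFiniteMeasure π]
  {μ : Fin T → Fin d → Measure ℝ} {M : ℝ}

theorem IsDiscriminatory.hasMarginals_of_integral_eq (hψ : IsDiscriminatory ψ)
    (hψcont : Continuous ψ) (hl : 1 ≤ l) [IsFiniteMeasure μ₀] (hμ₀ : HasMarginals μ₀ μ)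
    (heq : ∀ v ∈ neuralHedges T d ψ l, ∫ x, v x ∂π = ∫ x, v x ∂μ₀) : HasMarginals π μ := by
  intro t i
  let e := MeasurableEquiv.funUnique (Fin 1) ℝ
  have hmeas : Measurable fun x : Path T d => e.symm (x t i) :=
    e.symm.measurable.comp (by fun_prop)
  have hmap : π.map (fun x => e.symm (x t i)) = μ₀.map fun x => e.symm (x t i) := by
    refine hψ.separatesFiniteMeasures_neuralNets hψcont hl 1 _ _ ?_
    rintro F ⟨m, hF⟩
    have hFcont := hF.continuous hψcont
    rw [integral_map hmeas.aemeasurable hFcont.aestronglyMeasurable,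
      integral_map hmeas.aemeasurable hFcont.aestronglyMeasurable]
    obtain ⟨φ, h, H, hhedge⟩ := hF.exists_nnHedge_static t i
    have hπμ₀ := heq _ (H.mem_neuralHedges hψcont)
    simp only [ContinuousMap.coe_mk, hhedge] at hπμ₀
    exact hπμ₀
  have hproj (ρ : Measure (Path T d)) :
      ρ.map (fun x => x t i) = (ρ.map fun x => e.symm (x t i)).map e := by
    rw [Measure.map_map e.measurable hmeas]
    rfl
  rw [← hμ₀ t i, hproj, hproj, hmap]

theorem IsMartingaleMeasure.integral_mul_sub_eq_zero {t : ℕ} (ht : t + 1 < T) (i : Fin d)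
    (hπ : IsMartingaleMeasure π) (hint : ∀ t i, Integrable (fun x : Path T d => x t i) π)
    {H : Path T d → ℝ} (hH : Measurable[pastSigma T d t] H)
    (hHint : Integrable
      (fun x => H x * (x ⟨t + 1, ht⟩ i - x ⟨t, Nat.lt_of_succ_lt ht⟩ i)) π) :
    ∫ x, H x * (x ⟨t + 1, ht⟩ i - x ⟨t, Nat.lt_of_succ_lt ht⟩ i) ∂π = 0 :=
  ((hπ.isLocallyCentered_mul_sub hint ht i hH).integrable_and_integral_eq_zero
    (pastSigma_le t) hHint (.of_forall fun _ => le_rfl)).2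

theorem IsDiscriminatory.isMartingaleMeasure_of_integral_eq (hψ : IsDiscriminatory ψ)
    (hψcont : Continuous ψ) (hl : 1 ≤ l) [IsFiniteMeasure μ₀] (hμ₀ : IsMartingaleMeasure μ₀)
    (hμ₀cube : ∀ᵐ x ∂μ₀, x ∈ cube T d M) (hπcube : ∀ᵐ x ∂π, x ∈ cube T d M)
    (heq : ∀ v ∈ neuralHedges T d ψ l, ∫ x, v x ∂π = ∫ x, v x ∂μ₀) : IsMartingaleMeasure π := by
  rw [isMartingaleMeasure_iff_condExp_sub_ae_eq_zero
    fun t i => integrable_of_ae_mem_cube hπcube (by fun_prop)]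
  intro t ht i
  have hr : Continuous (restrFlatten T d t ht) := continuous_restrFlatten t ht
  have hcont {m : ℕ} {F : (Fin ((t + 1) * d) → ℝ) → ℝ} (hF : IsNeuralNet ψ l _ m F) :
      Continuous fun x : Path T d =>
        F (restrFlatten T d t ht x) * (x ⟨t + 1, ht⟩ i - x ⟨t, Nat.lt_of_succ_lt ht⟩ i) :=
    ((hF.continuous hψcont).comp hr).mul (by fun_prop)
  rw [pastSigma_eq_comap_restrFlatten t ht]
  refine (hψ.separatesFiniteMeasures_neuralNets hψcont hl _).condExp_ae_eq_zero ?_ hr.measurable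
    (integrable_of_ae_mem_cube hπcube (by fun_prop)) ?_ ?_
  · rintro F ⟨m, hF⟩
    exact (hF.continuous hψcont).measurable
  · rintro F ⟨m, hF⟩
    exact integrable_of_ae_mem_cube hπcube (hcont hF)
  · rintro F ⟨m, hF⟩
    obtain ⟨φ, h, H, hhedge⟩ := hF.exists_nnHedge_dynamic ht i
    have hFpast : Measurable[pastSigma T d t] fun x => F (restrFlatten T d t ht x) := by
      rw [pastSigma_eq_comap_restrFlatten t ht]
      exact (hF.continuous hψcont).measurable.comp (comap_measurable _)
    have hπμ₀ := heq _ (H.mem_neuralHedges hψcont)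
    simp only [ContinuousMap.coe_mk, hhedge] at hπμ₀
    rw [hπμ₀]
    exact hμ₀.integral_mul_sub_eq_zero ht i
      (fun t i => integrable_of_ae_mem_cube hμ₀cube (by fun_prop)) hFpast
      (integrable_of_ae_mem_cube hμ₀cube (hcont hF))

end Calibration

section DualValues

variable {T d : ℕ} {μ : Fin T → Fin d → Measure ℝ} {μ₀ : Measure (Path T d)} {ψ : ℝ → ℝ} {l : ℕ}
  {c : Path T d → ℝ} {M : ℝ}

theorem monotone_dualCubeNNVals : Monotone fun m => dualCubeNNVals ψ l m μ₀ c M := by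
  rintro m m' hm _ ⟨φ, h, H, hle, rfl⟩
  exact ⟨φ, h, H.mono hm, hle, rfl⟩

theorem iUnion_dualCubeNNVals (hψ : Continuous ψ) :
    ⋃ m, dualCubeNNVals ψ l m μ₀ c M =
      {r | ∃ v ∈ neuralHedges T d ψ l, (∀ x ∈ cube T d M, c x ≤ v x) ∧ ∫ x, v x ∂μ₀ = r} := by
  ext r
  simp only [Set.mem_iUnion, Set.mem_ofPred_eq]
  constructor
  · rintro ⟨m, φ, h, H, hle, rfl⟩
    exact ⟨_, H.mem_neuralHedges hψ, hle, rfl⟩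
  · rintro ⟨v, ⟨m, φ, h, H, hv⟩, hle, rfl⟩
    exact ⟨m, φ, h, H, fun x hx => (hle x hx).trans_eq (hv x), integral_congr_ae (.of_forall hv)⟩

theorem dualCubeNNVals_subset_dualCubeVals (hψ : Continuous ψ)
    (hμ : ∀ t i, μ t i (Set.Icc (-M) M)ᶜ = 0) (hμ₀ : μ₀ ∈ MartSet μ) (m : ℕ) :
    dualCubeNNVals ψ l m μ₀ c M ⊆ dualCubeVals μ μ₀ c M := by
  rintro _ ⟨φ, h, H, hle, rfl⟩
  obtain ⟨_, hmarg, -⟩ := hμ₀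
  refine ⟨φ, h, fun t i => ?_, H.measurable_dynamic hψ, hle, rfl⟩
  have hcont := H.continuous_static hψ t i
  rw [← hmarg t i, integrable_map_measure hcont.aestronglyMeasurable
    (Measurable.aemeasurable (by fun_prop))]
  exact integrable_of_ae_mem_cube (hmarg.ae_mem_cube hμ) (by fun_prop)

theorem dualCubeNNVals_eq_dualCubeVals_of_isEmpty [IsEmpty (Fin T × Fin d)] (m : ℕ) :
    dualCubeNNVals ψ l m μ₀ c M = dualCubeVals μ μ₀ c M := by
  have hzero (φ : Fin T → Fin d → ℝ → ℝ) (h : ∀ t : ℕ, t + 1 < T → Fin d → Path T d → ℝ) :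
      hedgeFn φ h = fun _ => 0 := by
    rcases isEmpty_prod.1 ‹IsEmpty (Fin T × Fin d)› with _ | _ <;> ext x <;> simp [hedgeFn]
  ext r
  simp only [dualCubeNNVals, dualCubeVals, hzero, Set.mem_ofPred_eq]
  constructor
  · rintro ⟨-, -, -, hr⟩
    exact ⟨0, fun _ _ _ _ => 0, fun _ _ => integrable_zero _ _ _, fun _ _ _ => measurable_const, hr⟩
  · rintro ⟨-, -, -, -, hr⟩
    exact ⟨_, _, .zero ψ l m, hr⟩

theorem nn_dual_convergence_general (hμ : ∀ t i, μ t i (Set.Icc (-M) M)ᶜ = 0)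
    (hc : Continuous c) (hψ : IsDiscriminatory ψ) (hψcont : Continuous ψ) (hl : 1 ≤ l)
    (hμ₀ : μ₀ ∈ MartSet μ) :
    Tendsto (fun m => sInf (dualCubeNNVals ψ l m μ₀ c M)) atTop
      (nhds (sInf (dualCubeVals μ μ₀ c M))) := by
  rcases isEmpty_or_nonempty (Fin T × Fin d) with _ | ⟨t, i⟩
  · simp only [dualCubeNNVals_eq_dualCubeVals_of_isEmpty (μ := μ), tendsto_const_nhds]
  have ⟨_, hmarg, hmart⟩ := hμ₀
  have hcube := hmarg.ae_mem_cube hμ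
  obtain ⟨π, hπprob, hπcube, hπeq, hπglb⟩ := exists_measure_isGLB_of_isCompact
    (isCompact_cube T d M) (neuralHedges T d ψ l) (one_mem_neuralHedges ψ l t i) μ₀ hcube ⟨c, hc⟩
  have hπ : π ∈ MartSet μ :=
    ⟨hπprob, hψ.hasMarginals_of_integral_eq hψcont hl hmarg hπeq,
      hψ.isMartingaleMeasure_of_integral_eq hψcont hl hmart hcube hπcube hπeq⟩
  refine tendsto_sInf_of_isGLB_iUnion monotone_dualCubeNNVals
    (dualCubeNNVals_subset_dualCubeVals hψcont hμ hμ₀)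
    (integral_mem_lowerBounds_dualCubeVals hμ hc hμ₀ hπ) ?_
  rw [iUnion_dualCubeNNVals hψcont]
  exact hπglb

end DualValues

/-- convergence of the neural-network dual values in the network size.
For continuous `c`, compactly supported marginals, and a continuous nondecreasing bounded
nonconstant activation with at least one hidden layer, `D̄^m(μ̌) → D̄(μ̌)` as `m → ∞`. -/
theorem nn_dual_convergence {T d : ℕ} (μ : Fin T → Fin d → Measure ℝ)
    (hprob : ∀ t i, IsProbabilityMeasure (μ t i))
    (M : ℝ) (hM : 0 < M)
    (hsupp : ∀ t i, (μ t i) (Set.Icc (-M) M)ᶜ = 0)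
    (c : Path T d → ℝ) (hc : Continuous c)
    (ψ : ℝ → ℝ) (hψcont : Continuous ψ) (hψmono : Monotone ψ)
    (hψbdd : ∃ C, ∀ x, |ψ x| ≤ C) (hψnonconst : ∃ x y, ψ x ≠ ψ y)
    (l : ℕ) (hl : 1 ≤ l)
    (μ0 : Measure (Path T d)) (hμ0 : μ0 ∈ MartSet μ) :
    Tendsto (fun m => sInf (dualCubeNNVals ψ l m μ0 c M)) atTop
      (nhds (sInf (dualCubeVals μ μ0 c M))) :=
  nn_dual_convergence_general hsupp hc (isDiscriminatory_of_monotone hψmono hψbdd hψnonconst)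
    hψcont hl hμ0

end MMOT
end
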